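/- Let n ≥ 2 and let P be a polytope realizing the type D_n model. Let f_i denote the number of i-dimensional faces of P for 0 ≤ i ≤ n (so f_n = 1). Then there exist nonnegative integers γ_0, γ_1, …, γ_{⌊n/2⌋} such that ∑_{i=0}^{n} f_i (t−1)^i = ∑_{j=0}^{⌊n/2⌋} γ_j t^j (1+t)^{n−2j} as polynomials in ℤ[t]. (Gal's conjecture holds for generalized associahedra of type D_n.) -/

import Mathlib

open Pointwise

namespace GalD

/-- A polytope in `ℝ^d`: the convex hull of a finite set of points. -/
def IsPolytope {d : ℕ} (P : Set (Fin d → ℝ)) : Prop :=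
  ∃ V : Finset (Fin d → ℝ), P = convexHull ℝ (V : Set (Fin d → ℝ))

/-- A face of `P`: a nonempty exposed face of `P` (`P` itself included). -/
def IsFaceOf {d : ℕ} (F P : Set (Fin d → ℝ)) : Prop :=
  F.Nonempty ∧ IsExposed ℝ P F

/-- The dimension of a set: the rank of the direction of its affine span. -/
noncomputable def polyDim {d : ℕ} (P : Set (Fin d → ℝ)) : ℕ :=
  Module.finrank ℝ (affineSpan ℝ P).direction

/-- A facet: a face of dimension `dim P - 1`. -/
def IsFacetOf {d : ℕ} (F P : Set (Fin d → ℝ)) : Prop :=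
  IsFaceOf F P ∧ polyDim F + 1 = polyDim P

/-- A vertex: a point spanning a face of dimension 0. -/
def IsVertexOf {d : ℕ} (v : Fin d → ℝ) (P : Set (Fin d → ℝ)) : Prop :=
  IsFaceOf {v} P

/-- A simple polytope: every vertex is contained in exactly `dim P` facets. -/
def IsSimplePolytope {d : ℕ} (P : Set (Fin d → ℝ)) : Prop :=
  IsPolytope P ∧ ∀ v, IsVertexOf v P →
    {F : Set (Fin d → ℝ) | IsFacetOf F P ∧ v ∈ F}.ncard = polyDim P

/-- A flag polytope: simple, and every collection of pairwise intersecting facets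
has a nonempty common intersection. -/
def IsFlagPolytope {d : ℕ} (P : Set (Fin d → ℝ)) : Prop :=
  IsSimplePolytope P ∧
  ∀ 𝒮 : Set (Set (Fin d → ℝ)), 𝒮.Nonempty → (∀ F ∈ 𝒮, IsFacetOf F P) →
    (∀ F ∈ 𝒮, ∀ G ∈ 𝒮, (F ∩ G).Nonempty) → (⋂₀ 𝒮).Nonempty

/-- Combinatorial equivalence: an order isomorphism between the face posets. -/
def CombEquiv {d₁ d₂ : ℕ} (P : Set (Fin d₁ → ℝ)) (Q : Set (Fin d₂ → ℝ)) : Prop :=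
  Nonempty ({F : Set (Fin d₁ → ℝ) // IsFaceOf F P} ≃o
            {G : Set (Fin d₂ → ℝ) // IsFaceOf G Q})

/-- The product of a set in `ℝ^{d₁}` and a set in `ℝ^{d₂}`, inside `ℝ^{d₁+d₂}`. -/
def polyProd {d₁ d₂ : ℕ} (Q : Set (Fin d₁ → ℝ)) (R : Set (Fin d₂ → ℝ)) :
    Set (Fin (d₁ + d₂) → ℝ) :=
  {x | (fun i => x (Fin.castAdd d₂ i)) ∈ Q ∧ (fun j => x (Fin.natAdd d₁ j)) ∈ R}

/-- `P` is not combinatorially equivalent to a nontrivial product of two polytopes. -/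
def Indecomposable {d : ℕ} (P : Set (Fin d → ℝ)) : Prop :=
  ¬ ∃ (d₁ d₂ : ℕ) (Q : Set (Fin d₁ → ℝ)) (R : Set (Fin d₂ → ℝ)),
    IsPolytope Q ∧ IsPolytope R ∧ 1 ≤ polyDim Q ∧ 1 ≤ polyDim R ∧
    CombEquiv P (polyProd Q R)

/-- A building set on the ground set `V`. -/
structure IsBuildingSetOn {m : ℕ} (V : Finset (Fin m)) (B : Finset (Finset (Fin m))) :
    Prop where
  subset_ground : ∀ S ∈ B, S ⊆ V
  nonempty_mem : ∀ S ∈ B, S.Nonempty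
  singleton_mem : ∀ i ∈ V, ({i} : Finset (Fin m)) ∈ B
  ground_mem : V ∈ B
  union_mem : ∀ S₁ ∈ B, ∀ S₂ ∈ B, (S₁ ∩ S₂).Nonempty → S₁ ∪ S₂ ∈ B

/-- A connected building set on `[m]`. -/
def IsConnectedBuildingSet (m : ℕ) (B : Finset (Finset (Fin m))) : Prop :=
  IsBuildingSetOn (Finset.univ : Finset (Fin m)) B

/-- The nestohedron `P_B`: the Minkowski sum of the simplices `Δ_S`, `S ∈ B`. -/
noncomputable def nestohedron (m : ℕ) (B : Finset (Finset (Fin m))) :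
    Set (Fin m → ℝ) :=
  ∑ S ∈ B, convexHull ℝ ((fun i => (Pi.single i 1 : Fin m → ℝ)) '' (S : Set (Fin m)))

/-- A diagonal of a convex `N`-gon with vertices labelled by `ZMod N`. -/
def IsDiag (N : ℕ) (e : Finset (ZMod N)) : Prop :=
  ∃ a b : ZMod N, e = {a, b} ∧ b ≠ a ∧ b ≠ a + 1 ∧ b ≠ a - 1

/-- `c` lies strictly between `a` and `b` on the arc from `a` to `b` (counterclockwise). -/
def StrictBtw (N : ℕ) (a c b : ZMod N) : Prop :=
  0 < (c - a).val ∧ (c - a).val < (b - a).val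

/-- Two diagonals cross: their endpoints alternate around the circle. -/
def Crosses (N : ℕ) (e f : Finset (ZMod N)) : Prop :=
  ∃ a b c d : ZMod N, e = {a, b} ∧ f = {c, d} ∧
    StrictBtw N a c b ∧ StrictBtw N b d a

/-- Image of a diagonal under the central symmetry `a ↦ a + n` of the `2n`-gon. -/
def centralSym (n : ℕ) (e : Finset (ZMod (2 * n))) : Finset (ZMod (2 * n)) :=
  e.image (· + (n : ZMod (2 * n)))

/-- A diameter of the `2n`-gon: a diagonal `{a, a + n}`. -/
def IsDiameter (n : ℕ) (e : Finset (ZMod (2 * n))) : Prop :=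
  ∃ a : ZMod (2 * n), e = {a, a + (n : ZMod (2 * n))}

/-- Raw elements of the type `D_n` model: symmetric pairs of diagonals,
red diameters and blue diameters. -/
inductive DElem (n : ℕ) where
  | pair : Finset (Finset (ZMod (2 * n))) → DElem n
  | red  : Finset (ZMod (2 * n)) → DElem n
  | blue : Finset (ZMod (2 * n)) → DElem n

/-- Membership in the set `M_n` of the type `D_n` model. -/
def memM (n : ℕ) : DElem n → Prop
  | .pair s => ∃ e, IsDiag (2 * n) e ∧ ¬ IsDiameter n e ∧ s = {e, centralSym n e}
  | .red e => IsDiag (2 * n) e ∧ IsDiameter n e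
  | .blue e => IsDiag (2 * n) e ∧ IsDiameter n e

/-- Compatibility of elements of the type `D_n` model. -/
def DCompat (n : ℕ) : DElem n → DElem n → Prop
  | .pair s, .pair t => ∀ e ∈ s, ∀ f ∈ t, ¬ Crosses (2 * n) e f
  | .pair s, .red e => ∀ f ∈ s, ¬ Crosses (2 * n) e f
  | .pair s, .blue e => ∀ f ∈ s, ¬ Crosses (2 * n) e f
  | .red e, .pair s => ∀ f ∈ s, ¬ Crosses (2 * n) e f
  | .blue e, .pair s => ∀ f ∈ s, ¬ Crosses (2 * n) e f
  | .red _, .red _ => True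
  | .blue _, .blue _ => True
  | .red e, .blue f => e = f
  | .blue e, .red f => e = f

/-- The set `M_n` of the type `D_n` model, as a type. -/
def MSet (n : ℕ) := {x : DElem n // memM n x}

/-- `P` realizes the type `D_n` model via the bijection `φ`. -/
def RealizesDWith (n : ℕ) {d : ℕ} (P : Set (Fin d → ℝ))
    (φ : MSet n → Set (Fin d → ℝ)) : Prop :=
  IsPolytope P ∧ IsFlagPolytope P ∧ polyDim P = n ∧
  (∀ x, IsFacetOf (φ x) P) ∧ Function.Injective φ ∧
  (∀ F, IsFacetOf F P → ∃ x, φ x = F) ∧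
  ∀ x y : MSet n, x ≠ y → ((φ x ∩ φ y).Nonempty ↔ DCompat n x.1 y.1)

/-- `P` realizes the type `D_n` model. -/
def RealizesD (n : ℕ) {d : ℕ} (P : Set (Fin d → ℝ)) : Prop :=
  ∃ φ, RealizesDWith n P φ

/-- Elements of the type `A_k` model: diagonals of a convex `(k+3)`-gon. -/
def ASet (k : ℕ) := {e : Finset (ZMod (k + 3)) // IsDiag (k + 3) e}

/-- `P` realizes the type `A_k` model via the bijection `φ`. -/
def RealizesAWith (k : ℕ) {d : ℕ} (P : Set (Fin d → ℝ))
    (φ : ASet k → Set (Fin d → ℝ)) : Prop :=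
  IsPolytope P ∧ IsFlagPolytope P ∧ polyDim P = k ∧
  (∀ x, IsFacetOf (φ x) P) ∧ Function.Injective φ ∧
  (∀ F, IsFacetOf F P → ∃ x, φ x = F) ∧
  ∀ x y : ASet k, x ≠ y → ((φ x ∩ φ y).Nonempty ↔ ¬ Crosses (k + 3) x.1 y.1)

/-- `P` realizes the type `A_k` model. -/
def RealizesA (k : ℕ) {d : ℕ} (P : Set (Fin d → ℝ)) : Prop :=
  ∃ φ, RealizesAWith k P φ

/-- A closed halfspace in `ℝ^d`. -/
def IsClosedHalfspace {d : ℕ} (H : Set (Fin d → ℝ)) : Prop :=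
  ∃ (l : (Fin d → ℝ) →ₗ[ℝ] ℝ) (c : ℝ), l ≠ 0 ∧ H = {x | l x ≤ c}

/-- `P'` is obtained from `P` by shaving off a face of codimension 2. -/
def ObtainedByShaving {d : ℕ} (P P' : Set (Fin d → ℝ)) : Prop :=
  ∃ G H : Set (Fin d → ℝ), IsFaceOf G P ∧ polyDim G + 2 = polyDim P ∧
    IsClosedHalfspace H ∧ G ∩ H = ∅ ∧
    (∀ v, IsVertexOf v P → v ∉ G → v ∈ interior H) ∧ P' = P ∩ H

/-- The restriction `B|_S` of a building set. -/
def restrictBS {m : ℕ} (B : Finset (Finset (Fin m))) (S : Finset (Fin m)) :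
    Finset (Finset (Fin m)) :=
  B.filter (· ⊆ S)

/-- The contraction `B / S` of a building set. -/
def contractBS {m : ℕ} (B : Finset (Finset (Fin m))) (S : Finset (Fin m)) :
    Finset (Finset (Fin m)) :=
  (B.filter (fun S'' => ¬ S'' ⊆ S)).image (fun S'' => S'' \ S)

/-- The subset of the nestohedron `P_B` on which `x ↦ ∑_{i ∈ S} x i` is minimized. -/
def minFace (m : ℕ) (B : Finset (Finset (Fin m))) (S : Finset (Fin m)) :
    Set (Fin m → ℝ) :=
  {x ∈ nestohedron m B | ∀ y ∈ nestohedron m B, ∑ i ∈ S, x i ≤ ∑ i ∈ S, y i}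

/-!
In a simple flag polytope the facets through a given face form a clique of the facet intersection
graph, and every clique arises from exactly one face, whose codimension is the size of the clique.
So the `f`-polynomial of `P` is, up to reversal, the clique polynomial of the type `D_n` model.

The derivative of a clique polynomial is the sum of the clique polynomials of the links of the
vertices. In type D these links are joins of smaller models of types A and D, which gives a
recursion for the derivative and hence, the constant coefficient being `1`, for the polynomial. Its
solution is explicit in the basis `(X * (1 + X)) ^ j * (1 + 2 * X) ^ (n - 2 * j)`: with type A
numbers `catalan j * m.choose (2 * j)` and type B numbers `centralBinom j * m.choose (2 * j)`, the
type D polynomial is the type B polynomial in degree `n` minus `n * X * (1 + X)` times the type A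
polynomial in degree `n - 2`. The coefficients are nonnegative, and reversing the coefficients and
substituting `t - 1` turns this basis into `t ^ j * (1 + t) ^ (n - 2 * j)`.
-/

section CliquePolynomial

open Polynomial Finset

variable {V W : Type*} (G : SimpleGraph V) (s t : Finset V)

/-- The cliques of `G` with all vertices in `s`, the empty clique included. -/
noncomputable def cliquesIn : Finset (Finset V) :=
  open Classical in {C ∈ s.powerset | G.IsClique (C : Set V)}

/-- The clique polynomial of `G` on `s`: its `i`-th coefficient counts the cliques in `s` with `i`
vertices. -/
noncomputable def cliquePoly : ℤ[X] :=
  ∑ C ∈ cliquesIn G s, X ^ #C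

/-- The link of `v` in the clique complex of `G` on `s`, as a set of vertices. -/
noncomputable def link (v : V) : Finset V :=
  open Classical in {w ∈ s | G.Adj v w}

variable {G s t}

lemma mem_cliquesIn {C : Finset V} : C ∈ cliquesIn G s ↔ C ⊆ s ∧ G.IsClique (C : Set V) := by
  simp [cliquesIn]

lemma mem_link {v w : V} : w ∈ link G s v ↔ w ∈ s ∧ G.Adj v w := by
  simp [link]

lemma coeff_cliquePoly (i : ℕ) :
    (cliquePoly G s).coeff i = #{C ∈ cliquesIn G s | #C = i} := by
  simp [cliquePoly, finsetSum_coeff, coeff_X_pow, eq_comm]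

lemma coeff_zero_cliquePoly : (cliquePoly G s).coeff 0 = 1 := by
  have : {C ∈ cliquesIn G s | #C = 0} = {∅} := by
    ext C
    simp +contextual [mem_cliquesIn, iff_def]
  rw [coeff_cliquePoly, this, card_singleton, Nat.cast_one]

lemma cliquePoly_empty : cliquePoly G ∅ = 1 := by
  have : cliquesIn G ∅ = {∅} := by
    ext C
    simp +contextual [mem_cliquesIn, iff_def]
  simp [cliquePoly, this]

-- Both sides count pairs of a clique `C` and a vertex `v ∈ C`, weighted by `X ^ (#C - 1)`.
lemma derivative_cliquePoly :
    derivative (cliquePoly G s) = ∑ v ∈ s, cliquePoly G (link G s v) := by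
  classical
  have expand : ∀ C ∈ cliquesIn G s,
      derivative ((X : ℤ[X]) ^ #C) = ∑ v ∈ s, if v ∈ C then X ^ (#C - 1) else 0 := by
    intro C hC
    rw [derivative_X_pow, ← sum_filter, filter_mem_eq_inter,
      inter_eq_right.mpr (mem_cliquesIn.mp hC).1, sum_const, nsmul_eq_mul, C_eq_natCast]
  rw [cliquePoly, derivative_sum, sum_congr rfl expand, sum_comm]
  refine sum_congr rfl fun v hv => ?_
  rw [← sum_filter]
  refine sum_bij' (fun C _ => C.erase v) (fun C _ => insert v C) ?_ ?_ ?_ ?_ ?_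
  · intro C hC
    obtain ⟨⟨hCs, hC⟩, hvC⟩ := (mem_filter.trans (and_congr_left' mem_cliquesIn)).mp hC
    refine mem_cliquesIn.mpr ⟨fun w hw => ?_, hC.subset (by simp)⟩
    exact mem_link.mpr ⟨hCs (mem_of_mem_erase hw),
      hC hvC (mem_of_mem_erase hw) (ne_of_mem_erase hw).symm⟩
  · intro C hC
    obtain ⟨hCs, hC⟩ := mem_cliquesIn.mp hC
    refine mem_filter.mpr ⟨mem_cliquesIn.mpr ⟨?_, ?_⟩, mem_insert_self v C⟩
    · exact insert_subset hv fun w hw => (mem_link.mp (hCs hw)).1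
    · rw [coe_insert]
      exact hC.insert fun w hw _ => (mem_link.mp (hCs hw)).2
  · exact fun C hC => insert_erase (mem_filter.mp hC).2
  · exact fun C hC => erase_insert fun hv =>
      G.irrefl (mem_link.mp ((mem_cliquesIn.mp hC).1 hv)).2
  · exact fun C hC => by rw [card_erase_of_mem (mem_filter.mp hC).2]

lemma cliquePoly_union [DecidableEq V] (hadj : ∀ x ∈ s, ∀ y ∈ t, G.Adj x y) :
    cliquePoly G (s ∪ t) = cliquePoly G s * cliquePoly G t := by
  have hst : Disjoint s t := disjoint_left.mpr fun x hs ht => G.irrefl (hadj x hs x ht)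
  rw [cliquePoly, cliquePoly, cliquePoly, sum_mul_sum, ← sum_product']
  symm
  refine sum_bij' (fun p _ => p.1 ∪ p.2) (fun C _ => (C ∩ s, C ∩ t)) ?_ ?_ ?_ ?_ ?_
  · rintro ⟨A, B⟩ h
    obtain ⟨⟨hAs, hA⟩, hBt, hB⟩ := (mem_product.trans (and_congr mem_cliquesIn mem_cliquesIn)).mp h
    refine mem_cliquesIn.mpr ⟨union_subset_union hAs hBt, ?_⟩
    rw [coe_union]
    have := G.symm
    exact Set.pairwise_union_of_symm.mpr
      ⟨hA, hB, fun x hx y hy _ => hadj x (hAs hx) y (hBt hy)⟩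
  · intro C h
    have hC := (mem_cliquesIn.mp h).2
    exact mem_product.mpr ⟨mem_cliquesIn.mpr ⟨inter_subset_right, hC.subset (by simp)⟩,
      mem_cliquesIn.mpr ⟨inter_subset_right, hC.subset (by simp)⟩⟩
  · rintro ⟨A, B⟩ h
    obtain ⟨⟨hAs, -⟩, hBt, -⟩ := (mem_product.trans (and_congr mem_cliquesIn mem_cliquesIn)).mp h
    have hAt : A ∩ t = ∅ := disjoint_iff_inter_eq_empty.mp (disjoint_of_subset_left hAs hst)
    have hBs : B ∩ s = ∅ := disjoint_iff_inter_eq_empty.mp (disjoint_of_subset_left hBt hst.symm)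
    simp only [union_inter_distrib_right, inter_eq_left.mpr hAs, inter_eq_left.mpr hBt, hAt, hBs,
      union_empty, empty_union]
  · intro C h
    rw [← inter_union_distrib_left, inter_eq_left.mpr (mem_cliquesIn.mp h).1]
  · rintro ⟨A, B⟩ h
    obtain ⟨hA, hB⟩ := mem_product.mp h
    rw [card_union_of_disjoint (disjoint_of_subset_left (mem_cliquesIn.mp hA).1
      (disjoint_of_subset_right (mem_cliquesIn.mp hB).1 hst)), pow_add]

lemma cliquePoly_eq_filter_mul_filter_not (p : V → Prop) [DecidablePred p]
    (hadj : ∀ x ∈ s, ∀ y ∈ s, p x → ¬ p y → G.Adj x y) :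
    cliquePoly G s = cliquePoly G {x ∈ s | p x} * cliquePoly G {x ∈ s | ¬ p x} := by
  classical
  rw [← cliquePoly_union, filter_union_filter_not_eq]
  intro x hx y hy
  obtain ⟨hx, hpx⟩ := mem_filter.mp hx
  obtain ⟨hy, hpy⟩ := mem_filter.mp hy
  exact hadj x hx y hy hpx hpy

lemma cliquePoly_congr {H : SimpleGraph W} {u : Finset W} {f : V → W}
    (hf : Set.BijOn f s u) (hadj : ∀ x ∈ s, ∀ y ∈ s, (G.Adj x y ↔ H.Adj (f x) (f y))) :
    cliquePoly G s = cliquePoly H u := by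
  classical
  have isClique_image : ∀ C ⊆ s, (H.IsClique (C.image f : Set W) ↔ G.IsClique (C : Set V)) := by
    intro C hC
    rw [coe_image]
    refine (hf.injOn.mono (coe_subset.mpr hC)).pairwise_image.trans ?_
    exact forall₂_congr fun x hx => forall₂_congr fun y hy =>
      imp_congr_right fun _ => (hadj x (hC hx) y (hC hy)).symm
  have image_eq : s.image f = u := by
    rw [← coe_inj, coe_image, hf.image_eq]
  refine sum_bij (fun C _ => C.image f) ?_ ?_ ?_ ?_
  · intro C hC
    obtain ⟨hCs, hC⟩ := mem_cliquesIn.mp hC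
    exact mem_cliquesIn.mpr ⟨image_eq ▸ image_subset_image hCs, (isClique_image C hCs).mpr hC⟩
  · intro C hC D hD h
    rw [← coe_inj, coe_image, coe_image] at h
    exact coe_inj.mp ((hf.injOn.image_eq_image_iff (coe_subset.mpr (mem_cliquesIn.mp hC).1)
      (coe_subset.mpr (mem_cliquesIn.mp hD).1)).mp h)
  · intro D hD
    obtain ⟨hDu, hD⟩ := mem_cliquesIn.mp hD
    obtain ⟨C, hCs, rfl⟩ := subset_image_iff.mp (image_eq.symm ▸ hDu)
    exact ⟨C, mem_cliquesIn.mpr ⟨hCs, (isClique_image C hCs).mp hD⟩, rfl⟩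
  · intro C hC
    rw [card_image_of_injOn (hf.injOn.mono (coe_subset.mpr (mem_cliquesIn.mp hC).1))]

lemma cliquePoly_link_congr {H : SimpleGraph W} {u : Finset W} {f : V → W} {v : V}
    (hf : Set.BijOn f s u) (hadj : ∀ x ∈ s, ∀ y ∈ s, (G.Adj x y ↔ H.Adj (f x) (f y)))
    (hv : v ∈ s) : cliquePoly G (link G s v) = cliquePoly H (link H u (f v)) := by
  refine cliquePoly_congr (f := f) ⟨?_, hf.injOn.mono ?_, ?_⟩ ?_
  · intro w hw
    obtain ⟨hw, hvw⟩ := mem_link.mp hw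
    exact mem_link.mpr ⟨hf.mapsTo hw, (hadj v hv w hw).mp hvw⟩
  · exact fun w hw => (mem_link.mp hw).1
  · intro w' hw'
    obtain ⟨hw', hvw⟩ := mem_link.mp hw'
    obtain ⟨w, hw, rfl⟩ := hf.surjOn hw'
    exact ⟨w, mem_link.mpr ⟨hw, (hadj v hv w hw).mpr hvw⟩, rfl⟩
  · exact fun x hx y hy => hadj x (mem_link.mp hx).1 y (mem_link.mp hy).1

end CliquePolynomial

section TypeA

open Polynomial Finset

/-- The chords with endpoints `a < b` and `c < d` cross. -/
def Interlaced (a b c d : ℕ) : Prop :=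
  (a < c ∧ c < b ∧ b < d) ∨ (c < a ∧ a < d ∧ d < b)

/-- The noncrossing relation on chords, a chord being the pair of its increasing endpoints. -/
def noncrossingGraph : SimpleGraph (ℕ × ℕ) where
  Adj x y := x ≠ y ∧ ¬ Interlaced x.1 x.2 y.1 y.2
  symm := ⟨fun x y h => ⟨h.1.symm, by have := h.2; unfold Interlaced at *; omega⟩⟩
  loopless := ⟨fun x h => h.1 rfl⟩

/-- The diagonals of the polygon with vertices `0, …, N`. -/
def polygonDiagonals (N : ℕ) : Finset (ℕ × ℕ) :=
  {x ∈ range (N + 1) ×ˢ range (N + 1) | x.1 + 2 ≤ x.2 ∧ ¬ (x.1 = 0 ∧ x.2 = N)}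

/-- The clique polynomial of the noncrossing diagonals of the polygon with vertices `0, …, N`, that
is, of the dual of an associahedron of dimension `N - 2`. -/
noncomputable def polygonPoly (N : ℕ) : ℤ[X] :=
  cliquePoly noncrossingGraph (polygonDiagonals N)

lemma noncrossingGraph_adj {a b c d : ℕ} : noncrossingGraph.Adj (a, b) (c, d) ↔
    ¬ (a = c ∧ b = d) ∧ ¬ Interlaced a b c d := by
  simp [noncrossingGraph]

lemma mem_polygonDiagonals {N a b : ℕ} :
    (a, b) ∈ polygonDiagonals N ↔ a + 2 ≤ b ∧ b ≤ N ∧ ¬ (a = 0 ∧ b = N) := by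
  simp only [polygonDiagonals, mem_filter, mem_product, mem_range]
  omega

lemma polygonPoly_two : polygonPoly 2 = 1 := by
  have : polygonDiagonals 2 = ∅ := by
    ext ⟨a, b⟩
    simp only [mem_polygonDiagonals, notMem_empty, iff_false]
    omega
  rw [polygonPoly, this, cliquePoly_empty]

variable {N p q : ℕ}

lemma mem_link_polygonDiagonals {a b : ℕ} :
    (a, b) ∈ link noncrossingGraph (polygonDiagonals N) (p, q) ↔
      (a + 2 ≤ b ∧ b ≤ N ∧ ¬ (a = 0 ∧ b = N)) ∧ ¬ (p = a ∧ q = b) ∧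
        ¬ ((p < a ∧ a < q ∧ q < b) ∨ (a < p ∧ p < b ∧ b < q)) := by
  rw [mem_link, mem_polygonDiagonals, noncrossingGraph_adj, Interlaced]

lemma cliquePoly_link_polygon_inside (h : (p, q) ∈ polygonDiagonals N) :
    cliquePoly noncrossingGraph
      {x ∈ link noncrossingGraph (polygonDiagonals N) (p, q) | p ≤ x.1 ∧ x.2 ≤ q} =
      polygonPoly (q - p) := by
  rw [mem_polygonDiagonals] at h
  refine cliquePoly_congr (Set.InvOn.bijOn (f := fun x => (x.1 - p, x.2 - p))
    (f' := fun x => (x.1 + p, x.2 + p)) ⟨?_, ?_⟩ ?_ ?_) ?_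
  · rintro ⟨a, b⟩ hx
    simp only [coe_filter, Set.mem_ofPred_eq, mem_link_polygonDiagonals, Prod.mk.injEq] at hx ⊢
    omega
  · rintro ⟨a, b⟩ -
    simp
  · rintro ⟨a, b⟩ hx
    simp only [mem_coe, mem_filter, mem_link_polygonDiagonals, mem_polygonDiagonals] at hx ⊢
    omega
  · rintro ⟨a, b⟩ hx
    simp only [mem_coe, mem_filter, mem_link_polygonDiagonals, mem_polygonDiagonals] at hx ⊢
    omega
  · rintro ⟨a, b⟩ hx ⟨c, d⟩ hy
    simp only [mem_filter, mem_link_polygonDiagonals, noncrossingGraph_adj, Interlaced] at hx hy ⊢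
    omega

-- Contracting the part of the polygon cut off by the diagonal identifies `q` with `p + 1`.
lemma cliquePoly_link_polygon_outside (h : (p, q) ∈ polygonDiagonals N) :
    cliquePoly noncrossingGraph
      {x ∈ link noncrossingGraph (polygonDiagonals N) (p, q) | ¬ (p ≤ x.1 ∧ x.2 ≤ q)} =
      polygonPoly (N + 1 - (q - p)) := by
  rw [mem_polygonDiagonals] at h
  let contract (a : ℕ) : ℕ := if a ≤ p then a else a - (q - p - 1)
  let expand (a : ℕ) : ℕ := if a ≤ p then a else a + (q - p - 1)
  refine cliquePoly_congr (Set.InvOn.bijOn (f := fun x => (contract x.1, contract x.2))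
    (f' := fun x => (expand x.1, expand x.2)) ⟨?_, ?_⟩ ?_ ?_) ?_
  · rintro ⟨a, b⟩ hx
    simp only [mem_coe, mem_filter, mem_link_polygonDiagonals, Prod.mk.injEq, contract,
      expand] at hx ⊢
    split_ifs <;> omega
  · rintro ⟨a, b⟩ -
    simp only [Prod.mk.injEq, contract, expand]
    split_ifs <;> omega
  · rintro ⟨a, b⟩ hx
    simp only [mem_coe, mem_filter, mem_link_polygonDiagonals, mem_polygonDiagonals,
      contract] at hx ⊢
    split_ifs <;> omega
  · rintro ⟨a, b⟩ hx
    simp only [mem_coe, mem_filter, mem_link_polygonDiagonals, mem_polygonDiagonals,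
      expand] at hx ⊢
    split_ifs <;> omega
  · rintro ⟨a, b⟩ hx ⟨c, d⟩ hy
    simp only [mem_filter, mem_link_polygonDiagonals, noncrossingGraph_adj, Interlaced,
      contract] at hx hy ⊢
    split_ifs <;> omega

lemma cliquePoly_link_polygon (h : (p, q) ∈ polygonDiagonals N) :
    cliquePoly noncrossingGraph (link noncrossingGraph (polygonDiagonals N) (p, q)) =
      polygonPoly (q - p) * polygonPoly (N + 1 - (q - p)) := by
  rw [cliquePoly_eq_filter_mul_filter_not (fun x => p ≤ x.1 ∧ x.2 ≤ q),
    cliquePoly_link_polygon_inside h, cliquePoly_link_polygon_outside h]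
  rintro ⟨a, b⟩ hx ⟨c, d⟩ hy
  simp only [mem_link_polygonDiagonals, noncrossingGraph_adj, Interlaced] at hx hy ⊢
  omega

lemma derivative_polygonPoly (m : ℕ) : derivative (polygonPoly (m + 2)) =
    ∑ i ∈ range m, ((m : ℤ[X]) + 1 - i) * (polygonPoly (i + 2) * polygonPoly (m - 1 - i + 2)) := by
  have count : ∀ i ∈ range m,
      ((m : ℤ[X]) + 1 - i) * (polygonPoly (i + 2) * polygonPoly (m - 1 - i + 2)) =
        ∑ _ ∈ range (m + 1 - i), polygonPoly (i + 2) * polygonPoly (m - 1 - i + 2) := by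
    intro i hi
    have : i ≤ m + 1 := by have := mem_range.mp hi; omega
    simp [Nat.cast_sub this]
  rw [polygonPoly, derivative_cliquePoly, sum_congr rfl count, sum_sigma']
  refine sum_bij' (fun x _ => (⟨x.2 - x.1 - 2, x.1⟩ : (_ : ℕ) × ℕ))
    (fun y _ => (y.2, y.2 + y.1 + 2)) ?_ ?_ ?_ ?_ ?_
  · rintro ⟨a, b⟩ h
    simp only [mem_polygonDiagonals, mem_sigma, mem_range] at h ⊢
    omega
  · rintro ⟨i, a⟩ h
    simp only [mem_polygonDiagonals, mem_sigma, mem_range] at h ⊢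
    omega
  · rintro ⟨a, b⟩ h
    simp only [mem_polygonDiagonals, Prod.mk.injEq, true_and] at h ⊢
    omega
  · rintro ⟨i, a⟩ -
    simp only [Sigma.mk.injEq, heq_eq_eq, and_true]
    omega
  · rintro ⟨a, b⟩ h
    rw [cliquePoly_link_polygon h]
    rw [mem_polygonDiagonals] at h
    dsimp only
    congr 2 <;> omega

end TypeA

section TypeD

open Polynomial Finset

/-- For chords of the `2n`-gon with endpoints `a < n`, `a < b ≤ a + n` and `c < n`, `c < d ≤ c + n`:
some image of one under the central symmetry crosses the other. -/
def OrbitsCross (n a b c d : ℕ) : Prop :=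
  Interlaced a b c d ∨ Interlaced (a + n) (b + n) c d ∨ Interlaced a b (c + n) (d + n)

/-- Compatibility of codes of elements of the type `D_n` model. The code `(0, a, b)` stands for the
centrally symmetric pair of the diagonal from `a` to `b`, and the codes `(1, a, a + n)` and
`(2, a, a + n)` for the red and the blue diameter through `a`. -/
def typeDGraph (n : ℕ) : SimpleGraph (ℕ × ℕ × ℕ) where
  Adj x y := x ≠ y ∧ (x.1 = 0 ∨ y.1 = 0 → ¬ OrbitsCross n x.2.1 x.2.2 y.2.1 y.2.2) ∧
    (x.1 ≠ 0 → y.1 ≠ 0 → x.1 = y.1 ∨ x.2.1 = y.2.1)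
  symm := ⟨fun x y h => ⟨h.1.symm, by have := h.2; unfold OrbitsCross Interlaced at *; omega⟩⟩
  loopless := ⟨fun x h => h.1 rfl⟩

/-- The codes of the elements of the type `D_n` model, each centrally symmetric pair being
represented by its diagonal `{a, b}` with `a < n` and `a + 2 ≤ b < a + n`. -/
def typeDCodes (n : ℕ) : Finset (ℕ × ℕ × ℕ) :=
  {x ∈ range 3 ×ˢ range n ×ˢ range (2 * n) |
    (x.1 = 0 ∧ x.2.1 + 2 ≤ x.2.2 ∧ x.2.2 < x.2.1 + n) ∨ (x.1 ≠ 0 ∧ x.2.2 = x.2.1 + n)}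

/-- The clique polynomial of the type `D_n` model. -/
noncomputable def typeDPoly (n : ℕ) : ℤ[X] :=
  cliquePoly (typeDGraph n) (typeDCodes n)

variable {n : ℕ}

lemma typeDGraph_adj {t a b u c d : ℕ} : (typeDGraph n).Adj (t, a, b) (u, c, d) ↔
    ¬ (t = u ∧ a = c ∧ b = d) ∧ (t = 0 ∨ u = 0 → ¬ OrbitsCross n a b c d) ∧
      (t ≠ 0 → u ≠ 0 → t = u ∨ a = c) := by
  simp [typeDGraph]

lemma mem_typeDCodes {t a b : ℕ} : (t, a, b) ∈ typeDCodes n ↔ t < 3 ∧ a < n ∧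
    ((t = 0 ∧ a + 2 ≤ b ∧ b < a + n) ∨ (t ≠ 0 ∧ b = a + n)) := by
  simp only [typeDCodes, mem_filter, mem_product, mem_range]
  omega

/-- The rotation of the `2n`-gon by one step, on codes. -/
def rotate (n : ℕ) (x : ℕ × ℕ × ℕ) : ℕ × ℕ × ℕ :=
  (x.1, if x.2.1 + 1 < n then (x.2.1 + 1, x.2.2 + 1) else (0, x.2.2 + 1 - n))

lemma rotate_eq_or {t a b : ℕ} (h : (t, a, b) ∈ typeDCodes n) :
    ∃ a' b', rotate n (t, a, b) = (t, a', b') ∧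
      ((a + 1 < n ∧ a' = a + 1 ∧ b' = b + 1) ∨ (a + 1 = n ∧ a' = 0 ∧ b' + n = b + 1)) := by
  rw [mem_typeDCodes] at h
  by_cases ha : a + 1 < n
  · exact ⟨a + 1, b + 1, by simp [rotate, ha], by omega⟩
  · exact ⟨0, b + 1 - n, by simp [rotate, ha], by omega⟩

lemma orbitsCross_rotate_iff {a b c d a' b' c' d' : ℕ} (hab : a < n ∧ a + 2 ≤ b ∧ b ≤ a + n)
    (hcd : c < n ∧ c + 2 ≤ d ∧ d ≤ c + n)
    (ha : (a + 1 < n ∧ a' = a + 1 ∧ b' = b + 1) ∨ (a + 1 = n ∧ a' = 0 ∧ b' + n = b + 1))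
    (hc : (c + 1 < n ∧ c' = c + 1 ∧ d' = d + 1) ∨ (c + 1 = n ∧ c' = 0 ∧ d' + n = d + 1)) :
    OrbitsCross n a' b' c' d' ↔ OrbitsCross n a b c d := by
  unfold OrbitsCross Interlaced
  rcases ha with ⟨-, rfl, rfl⟩ | ⟨rfl, rfl, hb⟩ <;>
    rcases hc with ⟨-, rfl, rfl⟩ | ⟨hc, rfl, hd⟩ <;> omega

lemma bijOn_rotate : Set.BijOn (rotate n) (typeDCodes n) (typeDCodes n) := by
  have mapsTo : Set.MapsTo (rotate n) (typeDCodes n) (typeDCodes n) := by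
    rintro ⟨t, a, b⟩ hx
    obtain ⟨a', b', hr, h⟩ := rotate_eq_or hx
    rw [mem_coe, mem_typeDCodes] at hx
    rw [hr, mem_coe, mem_typeDCodes]
    omega
  have injOn : Set.InjOn (rotate n) (typeDCodes n) := by
    rintro ⟨t, a, b⟩ hx ⟨u, c, d⟩ hy hxy
    obtain ⟨a', b', hr, h⟩ := rotate_eq_or hx
    obtain ⟨c', d', hr', h'⟩ := rotate_eq_or hy
    simp only [hr, hr', Prod.mk.injEq] at hxy ⊢
    omega
  exact ⟨mapsTo, injOn, surjOn_of_injOn_of_card_le _ mapsTo injOn le_rfl⟩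

lemma typeDGraph_adj_rotate_iff {x y : ℕ × ℕ × ℕ} (hn : 2 ≤ n) (hx : x ∈ typeDCodes n)
    (hy : y ∈ typeDCodes n) :
    (typeDGraph n).Adj x y ↔ (typeDGraph n).Adj (rotate n x) (rotate n y) := by
  obtain ⟨t, a, b⟩ := x
  obtain ⟨u, c, d⟩ := y
  obtain ⟨a', b', hr, ha⟩ := rotate_eq_or hx
  obtain ⟨c', d', hr', hc⟩ := rotate_eq_or hy
  have hab : a < n ∧ a + 2 ≤ b ∧ b ≤ a + n := by rw [mem_typeDCodes] at hx; omega
  have hcd : c < n ∧ c + 2 ≤ d ∧ d ≤ c + n := by rw [mem_typeDCodes] at hy; omega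
  have orbitsCross_iff := orbitsCross_rotate_iff hab hcd ha hc
  have fst_eq_iff : a = c ↔ a' = c' := by omega
  have endpoints_eq_iff : a = c ∧ b = d ↔ a' = c' ∧ b' = d' := by omega
  rw [hr, hr', typeDGraph_adj, typeDGraph_adj, orbitsCross_iff, endpoints_eq_iff,
    fst_eq_iff]

lemma cliquePoly_link_typeD_rotate {t a l : ℕ} (hn : 2 ≤ n) (h : (t, 0, l) ∈ typeDCodes n)
    (ha : a < n) :
    cliquePoly (typeDGraph n) (link (typeDGraph n) (typeDCodes n) (t, a, a + l)) =
      cliquePoly (typeDGraph n) (link (typeDGraph n) (typeDCodes n) (t, 0, l)) := by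
  induction a with
  | zero => rw [zero_add]
  | succ a ih =>
    have hmem : (t, a, a + l) ∈ typeDCodes n := by
      rw [mem_typeDCodes] at h ⊢
      omega
    rw [← ih (by omega), cliquePoly_link_congr bijOn_rotate
      (fun x hx y hy => typeDGraph_adj_rotate_iff hn hx hy) hmem]
    simp [rotate, ha, add_right_comm]

end TypeD

section TypeDRecursion

open Polynomial Finset

variable {n p t : ℕ}

lemma typeDGraph_adj_zero_left {a b u c d : ℕ} : (typeDGraph n).Adj (0, a, b) (u, c, d) ↔
    ¬ (u = 0 ∧ a = c ∧ b = d) ∧ ¬ Interlaced a b c d ∧ ¬ Interlaced (a + n) (b + n) c d ∧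
      ¬ Interlaced a b (c + n) (d + n) := by
  simp [typeDGraph_adj, OrbitsCross, eq_comm (a := 0)]

lemma typeDGraph_adj_zero_right {a b u c d : ℕ} : (typeDGraph n).Adj (u, c, d) (0, a, b) ↔
    ¬ (u = 0 ∧ a = c ∧ b = d) ∧ ¬ Interlaced a b c d ∧ ¬ Interlaced (a + n) (b + n) c d ∧
      ¬ Interlaced a b (c + n) (d + n) := by
  rw [SimpleGraph.adj_comm, typeDGraph_adj_zero_left]

lemma typeDGraph_adj_of_ne_zero {a b u c d : ℕ} (ht : t ≠ 0) (hu : u ≠ 0) :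
    (typeDGraph n).Adj (t, a, b) (u, c, d) ↔ ¬ (t = u ∧ a = c ∧ b = d) ∧ (t = u ∨ a = c) := by
  simp [typeDGraph_adj, ht, hu]

lemma mem_link_diameter {u c d : ℕ} (ht : t = 1 ∨ t = 2) :
    (u, c, d) ∈ link (typeDGraph n) (typeDCodes n) (t, 0, n) ↔
      (u = 0 ∧ c + 2 ≤ d ∧ d ≤ n ∧ d + 1 ≤ c + n) ∨ (u = t ∧ 0 < c ∧ c < n ∧ d = c + n) ∨
        (u = 3 - t ∧ 0 < n ∧ c = 0 ∧ d = n) := by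
  rw [mem_link, mem_typeDCodes]
  rcases Nat.eq_zero_or_pos u with rfl | hu
  · rw [typeDGraph_adj_zero_right]
    simp only [Interlaced, true_and, ne_eq, not_true_eq_false, false_and, or_false]
    omega
  · rw [typeDGraph_adj_of_ne_zero (by omega) (by omega)]
    omega

lemma mem_link_arc {u c d : ℕ} (hp : 1 ≤ p) (hpn : p + 2 ≤ n) :
    (u, c, d) ∈ link (typeDGraph n) (typeDCodes n) (0, p, n) ↔
      (u = 0 ∧ c + 2 ≤ d ∧ p ≤ c ∧ d ≤ n ∧ ¬ (c = p ∧ d = n)) ∨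
      (u < 3 ∧ c ≤ p ∧ (d ≤ p ∨ n ≤ d) ∧
        ((u = 0 ∧ c + 2 ≤ d ∧ d + 1 ≤ c + n ∧ ¬ (c = p ∧ d = n)) ∨ (u ≠ 0 ∧ d = c + n))) := by
  rw [mem_link, mem_typeDCodes, typeDGraph_adj_zero_left]
  simp only [Interlaced]
  rcases Nat.eq_zero_or_pos u with rfl | hu <;> omega

-- The diameter of colour `t` through `c > 0` becomes the diagonal from `c` to the new vertex
-- `n + 1`, and the diameter of the other colour through `0` becomes the diagonal from `0` to `n`.
lemma cliquePoly_link_diameter (ht : t = 1 ∨ t = 2) (hn : 2 ≤ n) :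
    cliquePoly (typeDGraph n) (link (typeDGraph n) (typeDCodes n) (t, 0, n)) =
      polygonPoly (n + 1) := by
  refine cliquePoly_congr (Set.InvOn.bijOn
    (f := fun x => (x.2.1, if x.1 = t then n + 1 else x.2.2))
    (f' := fun x => if x.2 = n + 1 then (t, x.1, x.1 + n) else
      (if x.1 = 0 ∧ x.2 = n then 3 - t else 0, x.1, x.2)) ⟨?_, ?_⟩ ?_ ?_) ?_
  · rintro ⟨u, c, d⟩ hx
    rw [mem_coe, mem_link_diameter ht] at hx
    dsimp only
    split_ifs <;> simp only [Prod.mk.injEq, and_true, true_and] <;> omega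
  · rintro ⟨c, d⟩ hx
    rw [mem_coe, mem_polygonDiagonals] at hx
    dsimp only
    split_ifs <;> simp only [Prod.mk.injEq, true_and] <;> omega
  · rintro ⟨u, c, d⟩ hx
    rw [mem_coe, mem_link_diameter ht] at hx
    rw [mem_coe, mem_polygonDiagonals]
    dsimp only
    split_ifs <;> omega
  · rintro ⟨c, d⟩ hx
    rw [mem_coe, mem_polygonDiagonals] at hx
    dsimp only
    split_ifs <;> rw [mem_coe, mem_link_diameter ht] <;> omega
  · rintro ⟨u, c, d⟩ hx ⟨v, e, f⟩ hy
    rw [mem_link_diameter ht] at hx hy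
    simp only [noncrossingGraph_adj]
    have ht0 : t ≠ 0 := by omega
    have ht3 : 3 - t ≠ 0 := by omega
    have htt : 3 - t ≠ t := by omega
    rcases hx with ⟨rfl, hx⟩ | ⟨rfl, hx⟩ | ⟨rfl, hx⟩ <;>
      rcases hy with ⟨rfl, hy⟩ | ⟨rfl, hy⟩ | ⟨rfl, hy⟩ <;>
      simp only [typeDGraph_adj_zero_left, typeDGraph_adj_zero_right, typeDGraph_adj_of_ne_zero,
        Interlaced, ne_eq, ht0, ht3, htt, ht0.symm, htt.symm, if_true, if_false, true_and,
        false_and, true_or, false_or, not_false_eq_true, and_true] <;> omega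

lemma cliquePoly_link_arc_inside (hp : 1 ≤ p) (hpn : p + 2 ≤ n) :
    cliquePoly (typeDGraph n) {x ∈ link (typeDGraph n) (typeDCodes n) (0, p, n) |
      x.1 = 0 ∧ p ≤ x.2.1 ∧ x.2.2 ≤ n} = polygonPoly (n - p) := by
  refine cliquePoly_congr (Set.InvOn.bijOn (f := fun x => (x.2.1 - p, x.2.2 - p))
    (f' := fun x => (0, x.1 + p, x.2 + p)) ⟨?_, ?_⟩ ?_ ?_) ?_
  · rintro ⟨u, c, d⟩ hx
    simp only [mem_coe, mem_filter, mem_link_arc hp hpn, Prod.mk.injEq] at hx ⊢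
    omega
  · rintro ⟨c, d⟩ -
    simp
  · rintro ⟨u, c, d⟩ hx
    simp only [mem_coe, mem_filter, mem_link_arc hp hpn, mem_polygonDiagonals] at hx ⊢
    omega
  · rintro ⟨c, d⟩ hx
    simp only [mem_coe, mem_filter, mem_link_arc hp hpn, mem_polygonDiagonals, true_and] at hx ⊢
    omega
  · rintro ⟨u, c, d⟩ hx ⟨v, e, f⟩ hy
    simp only [mem_filter, mem_link_arc hp hpn] at hx hy
    have hcd : c + 2 ≤ d ∧ p ≤ c ∧ d ≤ n := by omega
    have hef : e + 2 ≤ f ∧ p ≤ e ∧ f ≤ n := by omega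
    obtain ⟨-, rfl, -⟩ := hx
    obtain ⟨-, rfl, -⟩ := hy
    simp only [typeDGraph_adj_zero_left, noncrossingGraph_adj, Interlaced, true_and]
    omega

-- Contracting the parts of the `2n`-gon cut off by the pair identifies `n` with `p + 1`.
lemma cliquePoly_link_arc_outside (hp : 1 ≤ p) (hpn : p + 2 ≤ n) :
    cliquePoly (typeDGraph n) {x ∈ link (typeDGraph n) (typeDCodes n) (0, p, n) |
      ¬ (x.1 = 0 ∧ p ≤ x.2.1 ∧ x.2.2 ≤ n)} = typeDPoly (p + 1) := by
  let contract (d : ℕ) : ℕ := if d ≤ p then d else d - (n - p - 1)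
  let expand (d : ℕ) : ℕ := if d ≤ p then d else d + (n - p - 1)
  refine cliquePoly_congr (Set.InvOn.bijOn (f := fun x => (x.1, x.2.1, contract x.2.2))
    (f' := fun x => (x.1, x.2.1, expand x.2.2)) ⟨?_, ?_⟩ ?_ ?_) ?_
  · rintro ⟨u, c, d⟩ hx
    simp only [mem_coe, mem_filter, mem_link_arc hp hpn, Prod.mk.injEq, true_and, contract,
      expand] at hx ⊢
    split_ifs <;> omega
  · rintro ⟨u, c, d⟩ -
    simp only [Prod.mk.injEq, true_and, contract, expand]
    split_ifs <;> omega
  · rintro ⟨u, c, d⟩ hx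
    simp only [mem_coe, mem_filter, mem_link_arc hp hpn, mem_typeDCodes, contract] at hx ⊢
    split_ifs <;> omega
  · rintro ⟨u, c, d⟩ hx
    simp only [mem_coe, mem_filter, mem_link_arc hp hpn, mem_typeDCodes, expand] at hx ⊢
    split_ifs <;> omega
  · rintro ⟨u, c, d⟩ hx ⟨v, e, f⟩ hy
    simp only [mem_filter, mem_link_arc hp hpn] at hx hy
    have hcd : c < d ∧ c ≤ p ∧ (d ≤ p ∨ n ≤ d) ∧ d ≤ c + n := by omega
    have hef : e < f ∧ e ≤ p ∧ (f ≤ p ∨ n ≤ f) ∧ f ≤ e + n := by omega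
    have hd : (d ≤ p ∧ contract d = d) ∨ (n ≤ d ∧ contract d + n = d + p + 1) := by
      simp only [contract]
      split_ifs <;> omega
    have hf : (f ≤ p ∧ contract f = f) ∨ (n ≤ f ∧ contract f + n = f + p + 1) := by
      simp only [contract]
      split_ifs <;> omega
    have orbitsCross_iff :
        OrbitsCross (p + 1) c (contract d) e (contract f) ↔ OrbitsCross n c d e f := by
      clear hx hy
      unfold OrbitsCross Interlaced
      refine or_congr ?_ (or_congr ?_ ?_) <;> omega
    have endpoints_eq_iff : c = e ∧ contract d = contract f ↔ c = e ∧ d = f := by omega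
    rw [typeDGraph_adj, typeDGraph_adj, orbitsCross_iff, endpoints_eq_iff]

lemma cliquePoly_link_arc (hp : 1 ≤ p) (hpn : p + 2 ≤ n) :
    cliquePoly (typeDGraph n) (link (typeDGraph n) (typeDCodes n) (0, p, n)) =
      polygonPoly (n - p) * typeDPoly (p + 1) := by
  rw [cliquePoly_eq_filter_mul_filter_not (fun x => x.1 = 0 ∧ p ≤ x.2.1 ∧ x.2.2 ≤ n),
    cliquePoly_link_arc_inside hp hpn, cliquePoly_link_arc_outside hp hpn]
  rintro ⟨u, c, d⟩ hx ⟨v, e, f⟩ hy hcd hef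
  dsimp only at hcd hef
  rw [mem_link_arc hp hpn] at hx hy
  have hx' : c + 2 ≤ d ∧ p ≤ c ∧ d ≤ n := by omega
  have hy' : e ≤ p ∧ (f ≤ p ∨ n ≤ f) ∧ f ≤ e + n ∧ e < f ∧ ¬ (v = 0 ∧ p ≤ e ∧ f ≤ n) := by omega
  obtain ⟨rfl, -⟩ := hcd
  clear hx hy hef
  simp only [typeDGraph_adj_zero_left, Interlaced]
  omega

lemma cliquePoly_link_typeD_pair {a b : ℕ} (h : (0, a, b) ∈ typeDCodes n) :
    cliquePoly (typeDGraph n) (link (typeDGraph n) (typeDCodes n) (0, a, b)) =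
      polygonPoly (b - a) * typeDPoly (n + 1 - (b - a)) := by
  rw [mem_typeDCodes] at h
  have hmem : (0, 0, b - a) ∈ typeDCodes n := by
    rw [mem_typeDCodes]
    omega
  obtain ⟨p, hp⟩ : ∃ p, p + (b - a) = n := ⟨n - (b - a), by omega⟩
  calc _ = cliquePoly (typeDGraph n)
            (link (typeDGraph n) (typeDCodes n) (0, a, a + (b - a))) := by
        rw [Nat.add_sub_of_le (by omega : a ≤ b)]
    _ = cliquePoly (typeDGraph n) (link (typeDGraph n) (typeDCodes n) (0, p, p + (b - a))) := by
        rw [cliquePoly_link_typeD_rotate (by omega) hmem (by omega),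
          cliquePoly_link_typeD_rotate (by omega) hmem (by omega)]
    _ = polygonPoly (b - a) * typeDPoly (n + 1 - (b - a)) := by
        rw [hp, cliquePoly_link_arc (by omega) (by omega)]
        congr 2 <;> omega

lemma cliquePoly_link_typeD_diameter {a b : ℕ} (hn : 2 ≤ n) (ht : t ≠ 0)
    (h : (t, a, b) ∈ typeDCodes n) :
    cliquePoly (typeDGraph n) (link (typeDGraph n) (typeDCodes n) (t, a, b)) =
      polygonPoly (n + 1) := by
  rw [mem_typeDCodes] at h
  obtain rfl : b = a + n := by omega
  have hmem : (t, 0, n) ∈ typeDCodes n := by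
    rw [mem_typeDCodes]
    omega
  rw [cliquePoly_link_typeD_rotate hn hmem h.2.1, cliquePoly_link_diameter (by omega) hn]

lemma sum_link_typeD_diameters (hn : 2 ≤ n) :
    ∑ x ∈ typeDCodes n with x.1 ≠ 0, cliquePoly (typeDGraph n)
      (link (typeDGraph n) (typeDCodes n) x) = 2 * n * polygonPoly (n + 1) := by
  have link_eq : ∀ x ∈ (typeDCodes n).filter (·.1 ≠ 0), cliquePoly (typeDGraph n)
      (link (typeDGraph n) (typeDCodes n) x) = polygonPoly (n + 1) := by
    rintro ⟨t, a, b⟩ hx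
    obtain ⟨hx, ht⟩ := mem_filter.mp hx
    exact cliquePoly_link_typeD_diameter hn ht hx
  have card_eq : #((typeDCodes n).filter (·.1 ≠ 0)) = #(range 2 ×ˢ range n) := by
    refine card_bij' (fun x _ => (x.1 - 1, x.2.1)) (fun y _ => (y.1 + 1, y.2, y.2 + n))
      ?_ ?_ ?_ ?_
    · rintro ⟨t, a, b⟩ h
      simp only [mem_filter, mem_typeDCodes, mem_product, mem_range] at h ⊢
      omega
    · rintro ⟨t, a⟩ h
      simp only [mem_filter, mem_typeDCodes, mem_product, mem_range, and_true] at h ⊢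
      omega
    · rintro ⟨t, a, b⟩ h
      simp only [mem_filter, mem_typeDCodes, Prod.mk.injEq, true_and] at h ⊢
      omega
    · rintro ⟨t, a⟩ -
      simp
  rw [sum_congr rfl link_eq, sum_const, card_eq, card_product, card_range, card_range, nsmul_eq_mul]
  push_cast
  ring

lemma sum_link_typeD_pairs (m : ℕ) :
    ∑ x ∈ typeDCodes (m + 2) with ¬ x.1 ≠ 0, cliquePoly (typeDGraph (m + 2))
      (link (typeDGraph (m + 2)) (typeDCodes (m + 2)) x) =
        (m + 2) * ∑ i ∈ range m, polygonPoly (i + 2) * typeDPoly (m - 1 - i + 2) := by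
  have count : ∀ i ∈ range m,
      ((m : ℤ[X]) + 2) * (polygonPoly (i + 2) * typeDPoly (m - 1 - i + 2)) =
        ∑ _ ∈ range (m + 2), polygonPoly (i + 2) * typeDPoly (m - 1 - i + 2) := by
    simp
  rw [mul_sum, sum_congr rfl count, sum_sigma']
  refine sum_bij' (fun x _ => (⟨x.2.2 - x.2.1 - 2, x.2.1⟩ : (_ : ℕ) × ℕ))
    (fun y _ => (0, y.2, y.2 + y.1 + 2)) ?_ ?_ ?_ ?_ ?_
  · rintro ⟨t, a, b⟩ h
    simp only [mem_filter, mem_typeDCodes, mem_sigma, mem_range] at h ⊢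
    omega
  · rintro ⟨i, a⟩ h
    simp only [mem_filter, mem_typeDCodes, mem_sigma, mem_range, true_and] at h ⊢
    omega
  · rintro ⟨t, a, b⟩ h
    simp only [mem_filter, mem_typeDCodes, Prod.mk.injEq, true_and] at h ⊢
    omega
  · rintro ⟨i, a⟩ -
    simp only [Sigma.mk.injEq, heq_eq_eq, and_true]
    omega
  · rintro ⟨t, a, b⟩ h
    obtain ⟨h, ht⟩ := mem_filter.mp h
    obtain rfl : t = 0 := not_not.mp ht
    rw [cliquePoly_link_typeD_pair h]
    rw [mem_typeDCodes] at h
    dsimp only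
    congr 2 <;> omega

lemma derivative_typeDPoly (m : ℕ) : derivative (typeDPoly (m + 2)) =
    (m + 2) * (2 * polygonPoly (m + 3) +
      ∑ i ∈ range m, polygonPoly (i + 2) * typeDPoly (m - 1 - i + 2)) := by
  rw [typeDPoly, derivative_cliquePoly,
    ← sum_filter_add_sum_filter_not (typeDCodes (m + 2)) (fun x => x.1 ≠ 0),
    sum_link_typeD_diameters (Nat.le_add_left 2 m), sum_link_typeD_pairs]
  push_cast
  ring

end TypeDRecursion

section GammaBasis

open Polynomial Finset

/-- The polynomial with `γ`-vector `a` in degree `m`. The usual basis of `h`-polynomials,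
`t ^ j * (1 + t) ^ (m - 2 * j)`, appears here as `(X * (1 + X)) ^ j * (1 + 2 * X) ^ (m - 2 * j)`,
because a clique polynomial is an `f`-polynomial, with the faces of codimension `i` counted by the
coefficient of `X ^ i`. -/
noncomputable def ofGamma (m : ℕ) (a : ℕ → ℤ) : ℤ[X] :=
  ∑ j ∈ range (m / 2 + 1), (a j : ℤ[X]) * (X * (1 + X)) ^ j * (1 + 2 * X) ^ (m - 2 * j)

variable {m n : ℕ} {a b : ℕ → ℤ}

lemma ofGamma_congr (h : ∀ j, 2 * j ≤ m → a j = b j) : ofGamma m a = ofGamma m b :=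
  sum_congr rfl fun j hj => by rw [h j (by rw [mem_range] at hj; omega)]

lemma ofGamma_sub : ofGamma m (fun j => a j - b j) = ofGamma m a - ofGamma m b := by
  simp only [ofGamma, Int.cast_sub, sub_mul, sum_sub_distrib]

lemma ofGamma_add : ofGamma m (fun j => a j + b j) = ofGamma m a + ofGamma m b := by
  simp only [ofGamma, Int.cast_add, add_mul, sum_add_distrib]

lemma ofGamma_sum {ι : Type*} (s : Finset ι) (f : ι → ℕ → ℤ) :
    ofGamma m (fun j => ∑ i ∈ s, f i j) = ∑ i ∈ s, ofGamma m (f i) := by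
  simp only [ofGamma, Int.cast_sum, sum_mul]
  exact sum_comm

lemma intCast_mul_ofGamma (c : ℤ) : (c : ℤ[X]) * ofGamma m a = ofGamma m fun j => c * a j := by
  simp only [ofGamma, mul_sum, Int.cast_mul, mul_assoc]

lemma ofGamma_add_two (ha : a 0 = 0) :
    ofGamma (m + 2) a = X * (1 + X) * ofGamma m fun j => a (j + 1) := by
  rw [ofGamma, ofGamma, mul_sum, show (m + 2) / 2 + 1 = m / 2 + 1 + 1 by omega, sum_range_succ', ha,
    Int.cast_zero, zero_mul, zero_mul, add_zero]
  refine sum_congr rfl fun j _ => ?_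
  rw [show m + 2 - 2 * (j + 1) = m - 2 * j by omega]
  ring

lemma coeff_zero_ofGamma : (ofGamma m a).coeff 0 = a 0 := by
  rw [coeff_zero_eq_eval_zero, ofGamma, eval_finsetSum, sum_range_succ']
  simp

lemma ofGamma_mul_ofGamma (ha : ∀ j, m < 2 * j → a j = 0) (hb : ∀ j, n < 2 * j → b j = 0) :
    ofGamma m a * ofGamma n b =
      ofGamma (m + n) fun j => ∑ p ∈ HasAntidiagonal.antidiagonal j, a p.1 * b p.2 := by
  have maps : ∀ p ∈ range (m / 2 + 1) ×ˢ range (n / 2 + 1),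
      p.1 + p.2 ∈ range ((m + n) / 2 + 1) := by
    intro p hp
    simp only [mem_product, mem_range] at hp ⊢
    omega
  rw [ofGamma, ofGamma, sum_mul_sum, ← sum_product', ← sum_fiberwise_of_maps_to maps, ofGamma]
  refine sum_congr rfl fun j _ => ?_
  rw [Int.cast_sum, sum_mul, sum_mul]
  refine sum_congr_of_eq_on_inter ?_ ?_ ?_
  · intro p hp hp'
    rw [HasAntidiagonal.mem_antidiagonal] at hp'
    rw [mem_filter] at hp
    exact absurd hp.2 hp'
  · intro p hp hp'
    simp only [mem_filter, mem_product, mem_range, HasAntidiagonal.mem_antidiagonal] at hp hp'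
    obtain h | h : m < 2 * p.1 ∨ n < 2 * p.2 := by omega
    · simp [ha _ h]
    · simp [hb _ h]
  · intro p hp _
    simp only [mem_filter, mem_product, mem_range] at hp
    rw [← hp.2, show m + n - 2 * (p.1 + p.2) = (m - 2 * p.1) + (n - 2 * p.2) by omega]
    push_cast
    ring

lemma derivative_gammaBasis (j k : ℕ) :
    derivative ((X * (1 + X)) ^ j * (1 + 2 * X) ^ k : ℤ[X]) =
      (j : ℤ[X]) * ((X * (1 + X)) ^ (j - 1) * (1 + 2 * X) ^ (k + 1)) +
        2 * (k : ℤ[X]) * ((X * (1 + X)) ^ j * (1 + 2 * X) ^ (k - 1)) := by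
  have hU : derivative (X * (1 + X) : ℤ[X]) = 1 + 2 * X := by
    simp only [derivative_mul, derivative_X, one_mul, derivative_add, derivative_one, zero_add,
      mul_one]
    ring
  have hW : derivative (1 + 2 * X : ℤ[X]) = 2 := by simp
  rw [derivative_mul, derivative_pow, derivative_pow, hU, hW]
  simp only [C_eq_natCast]
  ring

lemma derivative_ofGamma (ha : ∀ j, m + 1 < 2 * j → a j = 0) : derivative (ofGamma (m + 1) a) =
    ofGamma m fun j => (j + 1) * a (j + 1) + 2 * (m + 1 - 2 * j) * a j := by
  have left : ∑ j ∈ range ((m + 1) / 2 + 1), (a j : ℤ[X]) *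
        ((j : ℤ[X]) * ((X * (1 + X)) ^ (j - 1) * (1 + 2 * X) ^ (m + 1 - 2 * j + 1))) =
      ofGamma m fun j => (j + 1) * a (j + 1) := by
    rw [sum_range_succ', Nat.cast_zero, zero_mul, mul_zero, add_zero, ofGamma]
    refine sum_congr_of_eq_on_inter ?_ ?_ ?_
    · intro j hj hj'
      rw [mem_range] at hj hj'
      omega
    · intro j _ hj
      rw [mem_range] at hj
      simp [ha (j + 1) (by omega)]
    · intro j hj _
      rw [mem_range] at hj
      rw [show m + 1 - 2 * (j + 1) + 1 = m - 2 * j by omega]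
      push_cast
      ring
  have right : ∑ j ∈ range ((m + 1) / 2 + 1), (a j : ℤ[X]) * (2 * ((m + 1 - 2 * j : ℕ) : ℤ[X]) *
        ((X * (1 + X)) ^ j * (1 + 2 * X) ^ (m + 1 - 2 * j - 1))) =
      ofGamma m fun j => 2 * (m + 1 - 2 * j) * a j := by
    refine sum_congr_of_eq_on_inter ?_ ?_ ?_
    · intro j hj hj'
      rw [mem_range] at hj hj'
      simp [show m + 1 - 2 * j = 0 by omega]
    · intro j hj hj'
      rw [mem_range] at hj hj'
      omega
    · intro j hj _
      rw [mem_range] at hj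
      rw [show m + 1 - 2 * j - 1 = m - 2 * j by omega, Nat.cast_sub (by omega)]
      push_cast
      ring
  rw [ofGamma_add, ← left, ← right, ← sum_add_distrib, ofGamma, derivative_sum]
  refine sum_congr rfl fun j _ => ?_
  rw [mul_assoc, derivative_intCast_mul, derivative_gammaBasis, mul_add]

/-- The polynomial with `γ`-vector `α j * m.choose (2 * j)` in degree `m`. -/
noncomputable def binomialGamma (α : ℕ → ℤ) (m : ℕ) : ℤ[X] :=
  ofGamma m fun j => α j * m.choose (2 * j)

lemma sum_range_choose_mul_choose (m p q : ℕ) :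
    ∑ i ∈ range (m + 1), i.choose p * (m - i).choose q = (m + 1).choose (p + q + 1) := by
  induction m generalizing q with
  | zero =>
    rcases p with _ | p <;> rcases q with _ | q <;> simp [Nat.choose_eq_zero_of_lt]
  | succ m ih =>
    rw [sum_range_succ]
    rcases q with _ | q
    · have h := ih 0
      simp only [Nat.choose_zero_right, mul_one] at h ⊢
      rw [h, add_zero, Nat.choose_succ_succ' (m + 1) p, add_comm]
    · have pascal : ∀ i ∈ range (m + 1), i.choose p * (m + 1 - i).choose (q + 1) =
          i.choose p * (m - i).choose q + i.choose p * (m - i).choose (q + 1) := by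
        intro i hi
        rw [mem_range] at hi
        rw [show m + 1 - i = m - i + 1 by omega, Nat.choose_succ_succ', mul_add]
      rw [sum_congr rfl pascal, sum_add_distrib, ih q, ih (q + 1), Nat.sub_self,
        Nat.choose_zero_succ, mul_zero, add_zero, Nat.choose_succ_succ' (m + 1) (p + (q + 1)),
        add_assoc p q 1]

lemma sum_binomialGamma_mul_binomialGamma (α β : ℕ → ℤ) (m : ℕ) :
    ∑ i ∈ range (m + 1), binomialGamma α i * binomialGamma β (m - i) = ofGamma m fun j =>
      (∑ p ∈ HasAntidiagonal.antidiagonal j, α p.1 * β p.2) * (m + 1).choose (2 * j + 1) := by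
  have vanish : ∀ (δ : ℕ → ℤ) (i j : ℕ), i < 2 * j → δ j * i.choose (2 * j) = 0 := by
    intro δ i j h
    rw [Nat.choose_eq_zero_of_lt h, Nat.cast_zero, mul_zero]
  have product : ∀ i ∈ range (m + 1), binomialGamma α i * binomialGamma β (m - i) =
      ofGamma m fun j => ∑ p ∈ HasAntidiagonal.antidiagonal j,
        (α p.1 * i.choose (2 * p.1)) * (β p.2 * (m - i).choose (2 * p.2)) := by
    intro i hi
    rw [mem_range] at hi
    rw [binomialGamma, binomialGamma, ofGamma_mul_ofGamma (vanish α i) (vanish β (m - i)),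
      Nat.add_sub_cancel' (by omega)]
  rw [sum_congr rfl product, ← ofGamma_sum]
  refine ofGamma_congr fun j _ => ?_
  rw [sum_comm, sum_mul]
  refine sum_congr rfl fun p hp => ?_
  rw [← HasAntidiagonal.mem_antidiagonal.mp hp, mul_add, ← sum_range_choose_mul_choose,
    Nat.cast_sum, mul_sum]
  exact sum_congr rfl fun i _ => by push_cast; ring

end GammaBasis

section GammaVectors

open Polynomial Finset

variable {m j k : ℕ}

lemma eq_of_derivative_eq_of_coeff_zero_eq {p q : ℤ[X]} (h : derivative p = derivative q)
    (h₀ : p.coeff 0 = q.coeff 0) : p = q := by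
  have hpq := eq_C_of_derivative_eq_zero (p := p - q) (by rw [derivative_sub, h, sub_self])
  rw [coeff_sub, h₀, sub_self, C_0] at hpq
  exact sub_eq_zero.mp hpq

lemma add_two_mul_catalan_succ (j : ℕ) :
    (j + 2) * catalan (j + 1) = 2 * (2 * j + 1) * catalan j := by
  have h := Nat.succ_mul_centralBinom_succ j
  rw [← succ_mul_catalan_eq_centralBinom, ← succ_mul_catalan_eq_centralBinom] at h
  exact Nat.eq_of_mul_eq_mul_left j.succ_pos (by linarith)

lemma centralBinom_succ_eq_mul_catalan (j : ℕ) :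
    Nat.centralBinom (j + 1) = 2 * (2 * j + 1) * catalan j := by
  refine Nat.eq_of_mul_eq_mul_left (show 0 < j + 1 by omega) ?_
  rw [Nat.succ_mul_centralBinom_succ, ← succ_mul_catalan_eq_centralBinom]
  ring

lemma sum_catalan_mul_centralBinom (j : ℕ) :
    ∑ p ∈ HasAntidiagonal.antidiagonal j, catalan p.1 * Nat.centralBinom p.2 =
      (2 * j + 1) * catalan j := by
  have weight : ∑ p ∈ HasAntidiagonal.antidiagonal j, catalan p.1 * Nat.centralBinom p.2 =
      ∑ p ∈ HasAntidiagonal.antidiagonal j, (p.2 + 1) * (catalan p.1 * catalan p.2) :=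
    sum_congr rfl fun p _ => by rw [← succ_mul_catalan_eq_centralBinom]; ring
  have swap : ∑ p ∈ HasAntidiagonal.antidiagonal j, (p.2 + 1) * (catalan p.1 * catalan p.2) =
      ∑ p ∈ HasAntidiagonal.antidiagonal j, (p.1 + 1) * (catalan p.1 * catalan p.2) := by
    rw [← Nat.sum_antidiagonal_swap]
    exact sum_congr rfl fun p _ => by rw [Prod.fst_swap, Prod.snd_swap]; ring
  have total : ∑ p ∈ HasAntidiagonal.antidiagonal j, (p.2 + 1) * (catalan p.1 * catalan p.2) +
      ∑ p ∈ HasAntidiagonal.antidiagonal j, (p.1 + 1) * (catalan p.1 * catalan p.2) =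
      (j + 2) * catalan (j + 1) := by
    rw [← sum_add_distrib, catalan_succ', mul_sum]
    refine sum_congr rfl fun p hp => ?_
    rw [← HasAntidiagonal.mem_antidiagonal.mp hp]
    ring
  rw [← swap, add_two_mul_catalan_succ] at total
  rw [weight]
  linarith

lemma two_mul_derivative_binomialGamma {α : ℕ → ℤ} {c : ℤ}
    (hα : ∀ j : ℕ, (j + c) * α (j + 1) = 2 * (2 * j + 1) * α j) (m : ℕ) :
    2 * derivative (binomialGamma α (m + 1)) =
      ((m + 2 * c : ℤ) : ℤ[X]) *
        ofGamma m fun j => α (j + 1) * (m + 1).choose (2 * j + 1) := by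
  rw [binomialGamma, derivative_ofGamma fun j hj => by simp [Nat.choose_eq_zero_of_lt hj],
    show (2 : ℤ[X]) = ((2 : ℤ) : ℤ[X]) by norm_num, intCast_mul_ofGamma, intCast_mul_ofGamma]
  refine ofGamma_congr fun j hj => ?_
  have above := Nat.choose_succ_right_eq (m + 1) (2 * j + 1)
  have below := Nat.choose_succ_right_eq (m + 1) (2 * j)
  zify [show 2 * j + 1 ≤ m + 1 by omega, show 2 * j ≤ m + 1 by omega] at above below
  rw [mul_add_one 2 j]
  linear_combination α (j + 1) * above - 4 * α j * below -
    2 * (m + 1).choose (2 * j + 1) * hα j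

/-- The polynomial with the `γ`-vector of the type A associahedron of dimension `m`. -/
noncomputable def gammaPolyA (m : ℕ) : ℤ[X] :=
  binomialGamma (fun j => catalan j) m

/-- The polynomial with the `γ`-vector of the type B associahedron of dimension `m`. -/
noncomputable def gammaPolyB (m : ℕ) : ℤ[X] :=
  binomialGamma (fun j => Nat.centralBinom j) m

lemma coeff_zero_gammaPolyA : (gammaPolyA m).coeff 0 = 1 := by
  simp [gammaPolyA, binomialGamma, coeff_zero_ofGamma]

lemma coeff_zero_gammaPolyB : (gammaPolyB m).coeff 0 = 1 := by
  simp [gammaPolyB, binomialGamma, coeff_zero_ofGamma]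

lemma two_mul_derivative_gammaPolyA (m : ℕ) : 2 * derivative (gammaPolyA (m + 1)) =
    ((m : ℤ[X]) + 4) * ∑ i ∈ range (m + 1), gammaPolyA i * gammaPolyA (m - i) := by
  simp only [gammaPolyA]
  rw [sum_binomialGamma_mul_binomialGamma, two_mul_derivative_binomialGamma (c := 2) fun j => by
    exact_mod_cast add_two_mul_catalan_succ j]
  push_cast [catalan_succ']
  norm_num

lemma derivative_gammaPolyB (m : ℕ) : derivative (gammaPolyB (m + 1)) =
    ((m : ℤ[X]) + 1) * (m + 2) * gammaPolyA m := by
  refine mul_left_cancel₀ (two_ne_zero (α := ℤ[X])) ?_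
  rw [gammaPolyB, two_mul_derivative_binomialGamma (c := 1) fun j => by
    exact_mod_cast Nat.succ_mul_centralBinom_succ j]
  have coeff : (ofGamma m fun j => (j + 1).centralBinom * (m + 1).choose (2 * j + 1)) =
      ((2 * (m + 1) : ℤ) : ℤ[X]) * gammaPolyA m := by
    rw [gammaPolyA, binomialGamma, intCast_mul_ofGamma]
    refine ofGamma_congr fun j _ => ?_
    have absorb := Nat.add_one_mul_choose_eq m (2 * j)
    zify at absorb
    rw [centralBinom_succ_eq_mul_catalan]
    push_cast
    linear_combination -2 * (catalan j : ℤ) * absorb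
  rw [coeff]
  push_cast
  ring

lemma sum_gammaPolyA_mul_gammaPolyB (m : ℕ) :
    ∑ i ∈ range (m + 1), gammaPolyA i * gammaPolyB (m - i) = ((m : ℤ[X]) + 1) * gammaPolyA m := by
  simp only [gammaPolyA, gammaPolyB]
  rw [sum_binomialGamma_mul_binomialGamma, binomialGamma,
    show (m : ℤ[X]) + 1 = ((m + 1 : ℤ) : ℤ[X]) by push_cast; rfl, intCast_mul_ofGamma]
  refine ofGamma_congr fun j _ => ?_
  have conv := sum_catalan_mul_centralBinom j
  have absorb := Nat.add_one_mul_choose_eq m (2 * j)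
  zify at conv absorb
  rw [conv]
  linear_combination -(catalan j : ℤ) * absorb

theorem polygonPoly_eq_gammaPolyA (m : ℕ) : polygonPoly (m + 2) = gammaPolyA m := by
  induction m using Nat.strong_induction_on with
  | _ m ih =>
    have hm : (polygonPoly (m + 2)).coeff 0 = 1 := coeff_zero_cliquePoly
    refine eq_of_derivative_eq_of_coeff_zero_eq ?_ (hm.trans coeff_zero_gammaPolyA.symm)
    obtain _ | m := m
    · simp [polygonPoly_two, gammaPolyA, binomialGamma, ofGamma]
    have smaller : derivative (polygonPoly (m + 1 + 2)) =
        ∑ i ∈ range (m + 1), ((m : ℤ[X]) + 2 - i) * (gammaPolyA i * gammaPolyA (m - i)) := by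
      rw [derivative_polygonPoly]
      refine sum_congr rfl fun i hi => ?_
      rw [ih i (mem_range.mp hi), ih _ (by omega), Nat.add_sub_cancel]
      push_cast
      ring
    have reversed : ∑ i ∈ range (m + 1),
          ((m : ℤ[X]) + 2 - i) * (gammaPolyA i * gammaPolyA (m - i)) =
        ∑ i ∈ range (m + 1), ((i : ℤ[X]) + 2) * (gammaPolyA i * gammaPolyA (m - i)) := by
      rw [← sum_range_reflect]
      refine sum_congr rfl fun i hi => ?_
      rw [mem_range] at hi
      rw [show m + 1 - 1 - i = m - i by omega, Nat.sub_sub_self (by omega),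
        Nat.cast_sub (by omega)]
      ring
    refine mul_left_cancel₀ (two_ne_zero (α := ℤ[X])) ?_
    rw [two_mul_derivative_gammaPolyA, two_mul, smaller]
    nth_rewrite 2 [reversed]
    rw [← sum_add_distrib, mul_sum]
    exact sum_congr rfl fun i _ => by ring

theorem typeDPoly_eq_gammaPolyB_sub (k : ℕ) : typeDPoly (k + 2) =
    gammaPolyB (k + 2) - ((k : ℤ[X]) + 2) * (X * (1 + X)) * gammaPolyA k := by
  induction k using Nat.strong_induction_on with
  | _ k ih =>
    have hk : (typeDPoly (k + 2)).coeff 0 = 1 := coeff_zero_cliquePoly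
    refine eq_of_derivative_eq_of_coeff_zero_eq ?_ (hk.trans ?_)
    · have hA := derivative_polygonPoly k
      rw [polygonPoly_eq_gammaPolyA] at hA
      have smaller : ∑ i ∈ range k, polygonPoly (i + 2) * typeDPoly (k - 1 - i + 2) =
          ∑ i ∈ range k, gammaPolyA i * gammaPolyB (k + 1 - i) -
            X * (1 + X) * derivative (gammaPolyA k) := by
        rw [hA, mul_sum, ← sum_sub_distrib]
        refine sum_congr rfl fun i hi => ?_
        rw [mem_range] at hi
        rw [ih _ (by omega), polygonPoly_eq_gammaPolyA, polygonPoly_eq_gammaPolyA,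
          show k - 1 - i + 2 = k + 1 - i by omega, Nat.sub_sub, Nat.cast_sub (by omega)]
        push_cast
        ring
      have convolution := sum_gammaPolyA_mul_gammaPolyB (k + 1)
      have B_one : gammaPolyB 1 = 1 + 2 * X := by
        simp [gammaPolyB, binomialGamma, ofGamma]
      have B_zero : gammaPolyB 0 = 1 := by
        simp [gammaPolyB, binomialGamma, ofGamma]
      rw [sum_range_succ, sum_range_succ, Nat.add_sub_cancel_left, Nat.sub_self, B_one, B_zero]
        at convolution
      rw [derivative_typeDPoly, smaller, eq_sub_of_add_eq (eq_sub_of_add_eq convolution),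
        polygonPoly_eq_gammaPolyA, derivative_sub, derivative_gammaPolyB]
      simp only [Nat.cast_add, Nat.cast_one, mul_one, derivative_mul, derivative_add,
        derivative_natCast, derivative_ofNat, add_zero, zero_mul, derivative_X, one_mul,
        derivative_one, zero_add]
      ring
    · simp [coeff_zero_gammaPolyB]

/-- The `γ`-vector of the type D associahedron of dimension `k + 2`. -/
def gammaD (k : ℕ) : ℕ → ℤ
  | 0 => 1
  | j + 1 => Nat.centralBinom (j + 1) * (k + 2).choose (2 * (j + 1)) -
      (k + 2) * (catalan j * k.choose (2 * j))

lemma gammaD_nonneg (k j : ℕ) : 0 ≤ gammaD k j := by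
  obtain _ | j := j
  · exact zero_le_one
  have absorb := Nat.add_one_mul_choose_eq k (2 * j)
  have absorb' := Nat.add_one_mul_choose_eq (k + 1) (2 * j + 1)
  zify at absorb absorb'
  have ratio : (j + 1) * gammaD k (j + 1) =
      (k - j) * ((k + 2) * (catalan j * k.choose (2 * j))) := by
    rw [gammaD, mul_add_one 2 j, centralBinom_succ_eq_mul_catalan]
    push_cast
    linear_combination -(2 * j + 1) * (catalan j : ℤ) * absorb' - (k + 2) * (catalan j : ℤ) * absorb
  refine nonneg_of_mul_nonneg_right (a := (j + 1 : ℤ)) ?_ (by positivity)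
  rw [ratio]
  by_cases h : 2 * j ≤ k
  · exact mul_nonneg (by omega) (by positivity)
  · simp [Nat.choose_eq_zero_of_lt (show k < 2 * j by omega)]

theorem typeDPoly_eq_ofGamma (k : ℕ) : typeDPoly (k + 2) = ofGamma (k + 2) (gammaD k) := by
  have shift : X * (1 + X) * gammaPolyA k = ofGamma (k + 2) fun j =>
      if j = 0 then 0 else catalan (j - 1) * k.choose (2 * (j - 1)) := by
    rw [ofGamma_add_two (if_pos rfl)]
    simp [gammaPolyA, binomialGamma]
  rw [typeDPoly_eq_gammaPolyB_sub, mul_assoc, shift,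
    show (k : ℤ[X]) + 2 = ((k + 2 : ℤ) : ℤ[X]) by push_cast; rfl,
    intCast_mul_ofGamma, gammaPolyB, binomialGamma, ← ofGamma_sub]
  refine ofGamma_congr fun j _ => ?_
  obtain _ | j := j <;> simp [gammaD]

end GammaVectors

section Reflection

open Polynomial Finset

variable {m N : ℕ} {a : ℕ → ℤ} {f : ℤ[X]}

lemma reflect_sum {ι : Type*} (s : Finset ι) (g : ι → ℤ[X]) :
    reflect N (∑ i ∈ s, g i) = ∑ i ∈ s, reflect N (g i) :=
  map_sum (⟨⟨reflect N, reflect_zero⟩, fun f g => reflect_add f g N⟩ : ℤ[X] →+ ℤ[X]) g s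

lemma reflect_pow (hf : f.natDegree ≤ N) (k : ℕ) : reflect (k * N) (f ^ k) = reflect N f ^ k := by
  induction k with
  | zero => simp
  | succ k ih =>
    rw [pow_succ, pow_succ, add_one_mul, reflect_mul _ _ (natDegree_pow_le_of_le k hf) hf, ih]

lemma comp_reflect_eq_sum (hf : f.natDegree ≤ N) (g : ℤ[X]) :
    (reflect N f).comp g = ∑ i ∈ range (N + 1), (f.coeff (N - i) : ℤ[X]) * g ^ i := by
  have degree : (reflect N f).natDegree < N + 1 :=
    Nat.lt_succ_of_le (natDegree_reflect_le.trans (max_le le_rfl hf))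
  rw [comp, eval₂_eq_sum_range' _ degree]
  refine sum_congr rfl fun i hi => ?_
  rw [coeff_reflect, revAt_le (Nat.lt_succ_iff.mp (mem_range.mp hi))]
  rfl

lemma natDegree_gammaBasis_le {j : ℕ} (hj : 2 * j ≤ m) :
    ((X * (1 + X)) ^ j * (1 + 2 * X) ^ (m - 2 * j) : ℤ[X]).natDegree ≤ m := by
  have hU : (X * (1 + X) : ℤ[X]).natDegree ≤ 2 := by compute_degree
  have hW : (1 + 2 * X : ℤ[X]).natDegree ≤ 1 := by compute_degree
  have := natDegree_mul_le_of_le (natDegree_pow_le_of_le j hU)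
    (natDegree_pow_le_of_le (m - 2 * j) hW)
  omega

lemma natDegree_ofGamma_le : (ofGamma m a).natDegree ≤ m := by
  refine natDegree_sum_le_of_forall_le _ _ fun j hj => ?_
  rw [mul_assoc, ← C_eq_intCast]
  refine (natDegree_C_mul_le _ _).trans (natDegree_gammaBasis_le ?_)
  rw [mem_range] at hj
  omega

lemma reflect_gammaBasis {j : ℕ} (hj : 2 * j ≤ m) :
    reflect m ((X * (1 + X)) ^ j * (1 + 2 * X) ^ (m - 2 * j) : ℤ[X]) =
      (X + 1) ^ j * (X + 2) ^ (m - 2 * j) := by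
  have hU : (X * (1 + X) : ℤ[X]).natDegree ≤ 2 := by compute_degree
  have hW : (1 + 2 * X : ℤ[X]).natDegree ≤ 1 := by compute_degree
  have reflect_U : reflect 2 (X * (1 + X) : ℤ[X]) = X + 1 := by
    rw [mul_one_add, ← sq, reflect_add, ← pow_one X, ← pow_mul, reflect_monomial, reflect_monomial]
    simp [revAt_le]
  have reflect_W : reflect 1 (1 + 2 * X : ℤ[X]) = X + 2 := by
    rw [reflect_add, reflect_one, ← C_ofNat, reflect_C_mul, reflect_one_X, pow_one, mul_one]
  obtain ⟨k, rfl⟩ := Nat.exists_eq_add_of_le hj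
  rw [Nat.add_sub_cancel_left, ← reflect_U, ← reflect_W, ← reflect_pow hU, ← reflect_pow hW,
    ← reflect_mul _ _ (natDegree_pow_le_of_le j hU) (natDegree_pow_le_of_le k hW), mul_comm 2 j,
    mul_one]

lemma reflect_ofGamma_comp (m : ℕ) (a : ℕ → ℤ) : (reflect m (ofGamma m a)).comp (X - 1) =
    ∑ j ∈ range (m / 2 + 1), (a j : ℤ[X]) * X ^ j * (1 + X) ^ (m - 2 * j) := by
  rw [ofGamma, reflect_sum, Polynomial.sum_comp]
  refine sum_congr rfl fun j hj => ?_
  rw [mem_range] at hj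
  rw [mul_assoc, ← C_eq_intCast, reflect_C_mul, reflect_gammaBasis (by omega)]
  have shift₁ : (X + 1 : ℤ[X]).comp (X - 1) = X := by simp
  have shift₂ : (X + 2 : ℤ[X]).comp (X - 1) = 1 + X := by
    rw [add_comp, X_comp, ofNat_comp]
    ring
  rw [mul_comp, mul_comp, pow_comp, pow_comp, C_comp, shift₁, shift₂, mul_assoc]

theorem sum_coeff_ofGamma_mul_X_sub_one_pow (m : ℕ) (a : ℕ → ℤ) :
    ∑ i ∈ range (m + 1), ((ofGamma m a).coeff (m - i) : ℤ[X]) * (X - 1) ^ i =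
      ∑ j ∈ range (m / 2 + 1), (a j : ℤ[X]) * X ^ j * (1 + X) ^ (m - 2 * j) := by
  rw [← reflect_ofGamma_comp, comp_reflect_eq_sum natDegree_ofGamma_le]

end Reflection

section PointConfigurations

lemma exists_forall_pos_mul_add {α : Type*} {s : Set α} (hs : s.Finite) (f g : α → ℝ) :
    ∃ M : ℝ, ∀ v ∈ s, 0 < f v → 0 < M * f v + g v := by
  obtain ⟨M, hM⟩ := (hs.image fun v => -g v / f v).bddAbove
  refine ⟨M + 1, fun v hv hfv => ?_⟩
  have : -g v / f v < M + 1 := (hM (Set.mem_image_of_mem _ hv)).trans_lt (lt_add_one M)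
  rw [div_lt_iff₀ hfv] at this
  linarith

variable {E : Type*} [AddCommGroup E] [Module ℝ E] {V A B G H : Set E}

/-- `A` is a face of the point configuration `V`: a nonempty subset on which an affine functional
that is nonnegative on `V` vanishes. Both a finite set and its convex hull serve as `V`. -/
def IsAffineFace (V A : Set E) : Prop :=
  A.Nonempty ∧ ∃ f : E →ᵃ[ℝ] ℝ, (∀ v ∈ V, 0 ≤ f v) ∧ A = {v ∈ V | f v = 0}

/-- The dimension of the affine span of a set, which is `0` for the empty set. -/
noncomputable def affDim (A : Set E) : ℕ :=
  Module.finrank ℝ (vectorSpan ℝ A)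

/-- A facet of a point configuration: a face of codimension one. -/
def IsAffineFacet (V H : Set E) : Prop :=
  IsAffineFace V H ∧ affDim H + 1 = affDim V

/-- The facets of a point configuration `V` that contain `A`. -/
def facetsContaining (V A : Set E) : Set (Set E) :=
  {H | IsAffineFacet V H ∧ A ⊆ H}

/-- A point configuration is simple if each of its vertices lies in exactly `affDim V` facets. -/
def IsSimpleConfiguration (V : Set E) : Prop :=
  ∀ v, IsAffineFace V {v} → (facetsContaining V {v}).ncard = affDim V

lemma IsAffineFace.subset (hA : IsAffineFace V A) : A ⊆ V := by
  obtain ⟨-, f, -, rfl⟩ := hA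
  exact Set.sep_subset _ _

lemma IsAffineFace.self (hV : V.Nonempty) : IsAffineFace V V :=
  ⟨hV, 0, by simp, by simp⟩

lemma IsAffineFace.restrict (hA : IsAffineFace V A) (hAG : A ⊆ G) (hGV : G ⊆ V) :
    IsAffineFace G A := by
  obtain ⟨hne, f, hf, rfl⟩ := hA
  exact ⟨hne, f, fun v hv => hf v (hGV hv),
    Set.Subset.antisymm (fun v hv => ⟨hAG hv, hv.2⟩) fun v hv => ⟨hGV hv.1, hv.2⟩⟩

-- A functional cutting out `B` in `A` may be negative on `V \ A`; adding a large multiple of a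
-- functional that cuts out `A` in `V` repairs this.
lemma IsAffineFace.trans (hV : V.Finite) (hA : IsAffineFace V A) (hB : IsAffineFace A B) :
    IsAffineFace V B := by
  obtain ⟨-, f, hf, rfl⟩ := hA
  obtain ⟨hne, g, hg, rfl⟩ := hB
  obtain ⟨M, hM⟩ := exists_forall_pos_mul_add hV f g
  refine ⟨hne, M • f + g, fun v hv => ?_, ?_⟩
  · rcases (hf v hv).eq_or_lt with hfv | hfv
    · simpa [← hfv] using hg v ⟨hv, hfv.symm⟩
    · exact (hM v hv hfv).le
  · ext v
    constructor
    · rintro ⟨⟨hv, hfv⟩, hgv⟩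
      exact ⟨hv, by simp [hfv, hgv]⟩
    · rintro ⟨hv, hv0⟩
      rcases (hf v hv).eq_or_lt with hfv | hfv
      · exact ⟨⟨hv, hfv.symm⟩, by simpa [← hfv] using hv0⟩
      · exact absurd hv0 (hM v hv hfv).ne'

lemma IsAffineFace.inter (hA : IsAffineFace V A) (hB : IsAffineFace V B)
    (hne : (A ∩ B).Nonempty) : IsAffineFace V (A ∩ B) := by
  obtain ⟨-, f, hf, rfl⟩ := hA
  obtain ⟨-, g, hg, rfl⟩ := hB
  refine ⟨hne, f + g, fun v hv => add_nonneg (hf v hv) (hg v hv), ?_⟩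
  ext v
  constructor
  · rintro ⟨⟨hv, hfv⟩, -, hgv⟩
    exact ⟨hv, by simp [hfv, hgv]⟩
  · rintro ⟨hv, hv0⟩
    obtain ⟨hfv, hgv⟩ := (add_eq_zero_iff_of_nonneg (hf v hv) (hg v hv)).mp hv0
    exact ⟨⟨hv, hfv⟩, hv, hgv⟩

lemma isAffineFace_inter_sInter {T : Set (Set E)} (hT : T.Finite)
    (hface : ∀ H ∈ T, IsAffineFace V H) (hne : (V ∩ ⋂₀ T).Nonempty) :
    IsAffineFace V (V ∩ ⋂₀ T) := by
  induction T, hT using Set.Finite.induction_on with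
  | empty => simpa using IsAffineFace.self (hne.mono Set.inter_subset_left)
  | @insert H T _ _ ih =>
    rw [Set.sInter_insert, Set.inter_left_comm] at hne ⊢
    exact (hface H (Set.mem_insert H T)).inter
      (ih (fun K hK => hface K (Set.mem_insert_of_mem H hK)) (hne.mono Set.inter_subset_right)) hne

lemma linear_apply_eq_zero_of_mem_vectorSpan {f : E →ᵃ[ℝ] ℝ} (hf : ∀ a ∈ A, f a = 0) {w : E}
    (hw : w ∈ vectorSpan ℝ A) : f.linear w = 0 := by
  suffices vectorSpan ℝ A ≤ LinearMap.ker f.linear from this hw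
  rw [vectorSpan_def, Submodule.span_le]
  rintro _ ⟨a, ha, b, hb, rfl⟩
  change f.linear (a -ᵥ b) = 0
  rw [AffineMap.linearMap_vsub, hf a ha, hf b hb, vsub_self]

lemma exists_affineMap_ne_zero {a v : E} (ha : a ∈ A) (hv : v - a ∉ vectorSpan ℝ A) :
    ∃ m : E →ᵃ[ℝ] ℝ, (∀ x ∈ A, m x = 0) ∧ m v ≠ 0 := by
  obtain ⟨l, hl, hker⟩ := Submodule.exists_le_ker_of_notMem hv
  refine ⟨l.toAffineMap - AffineMap.const ℝ E (l a), fun x hx => ?_, ?_⟩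
  · simpa using hker (vsub_mem_vectorSpan ℝ hx ha)
  · simpa using hl

-- Rotate the hyperplane `m = 0` about `A` until it meets another point of `G`.
lemma exists_tilted_face {f m : E →ᵃ[ℝ] ℝ} (hG : G.Finite) (hAne : A.Nonempty)
    (hf : ∀ v ∈ G, 0 ≤ f v) (hA : A = {v ∈ G | f v = 0}) (hm : ∀ v ∈ A, m v = 0) (hne : A ≠ G) :
    ∃ r : ℝ, (∀ v ∈ G, r * f v ≤ m v) ∧ IsAffineFace G {v ∈ G | m v = r * f v} ∧
      A ⊂ {v ∈ G | m v = r * f v} := by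
  have hAG : A ⊆ G := hA ▸ Set.sep_subset _ _
  have hfA : ∀ v ∈ A, f v = 0 := fun v hv => (hA ▸ hv :).2
  have hpos : ∀ v ∈ G \ A, 0 < f v := fun v hv =>
    (hf v hv.1).lt_of_ne' fun hfv => hv.2 (hA ▸ ⟨hv.1, hfv⟩)
  obtain ⟨w, hw, hmin⟩ := Set.exists_min_image (G \ A) (fun v => m v / f v) hG.sdiff
    (Set.sdiff_nonempty.mpr fun hGA => hne (hAG.antisymm hGA))
  have hle : ∀ v ∈ G, m w / f w * f v ≤ m v := by
    intro v hv
    by_cases hvA : v ∈ A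
    · simp [hfA v hvA, hm v hvA]
    · exact (le_div_iff₀ (hpos v ⟨hv, hvA⟩)).mp (hmin v ⟨hv, hvA⟩)
  have hsub : A ⊆ {v ∈ G | m v = m w / f w * f v} := fun v hv =>
    ⟨hAG hv, by rw [hfA v hv, hm v hv, mul_zero]⟩
  refine ⟨m w / f w, hle, ⟨hAne.mono hsub, m - (m w / f w) • f, fun v hv => ?_, ?_⟩,
    hsub, fun h => hw.2 (h ⟨hw.1, (div_mul_cancel₀ _ (hpos w hw).ne').symm⟩)⟩
  · simpa using hle v hv
  · ext v
    simp [sub_eq_zero]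

section FiniteDimensional

variable [FiniteDimensional ℝ E]

lemma affDim_mono (hAB : A ⊆ B) : affDim A ≤ affDim B :=
  Submodule.finrank_mono (vectorSpan_mono ℝ hAB)

lemma IsAffineFace.affDim_lt (hA : IsAffineFace V A) (hAB : A ⊂ B) (hBV : B ⊆ V) :
    affDim A < affDim B := by
  refine (affDim_mono hAB.subset).lt_of_ne fun hdim => hAB.not_subset fun b hb => ?_
  have hspan := Submodule.eq_of_le_of_finrank_eq (vectorSpan_mono ℝ hAB.subset) hdim
  obtain ⟨⟨a, ha⟩, f, -, rfl⟩ := hA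
  have hba : f.linear (b -ᵥ a) = 0 :=
    linear_apply_eq_zero_of_mem_vectorSpan (A := {v ∈ V | f v = 0}) (fun a ha => ha.2)
      (hspan ▸ vsub_mem_vectorSpan ℝ hb (hAB.subset ha))
  rw [AffineMap.linearMap_vsub, ha.2, vsub_eq_sub, sub_zero] at hba
  exact ⟨hBV hb, hba⟩

lemma exists_notMem_vectorSpan_insert {a : E} (haG : a ∈ G) (hdim : affDim A + 2 ≤ affDim G)
    (w : E) : ∃ v ∈ G, v - a ∉ vectorSpan ℝ (insert w A) := by
  by_contra! hcon
  have hle : vectorSpan ℝ G ≤ vectorSpan ℝ (insert w A) := by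
    rw [vectorSpan_eq_span_vsub_set_right ℝ haG, Submodule.span_le]
    rintro _ ⟨x, hx, rfl⟩
    exact hcon x hx
  have hG : affDim G ≤ affDim A + 1 :=
    (Submodule.finrank_mono hle).trans (finrank_vectorSpan_insert_le_set ℝ A w)
  omega

-- Tilt the supporting hyperplane of `A` in two opposite directions.
lemma IsAffineFace.exists_inter_eq (hG : G.Finite) (hA : IsAffineFace G A)
    (hdim : affDim A + 2 ≤ affDim G) :
    ∃ G₁ G₂ : Set E, IsAffineFace G G₁ ∧ IsAffineFace G G₂ ∧ A ⊂ G₁ ∧ A ⊂ G₂ ∧ G₁ ∩ G₂ = A := by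
  have hAG := hA.subset
  have hne : A ≠ G := by rintro rfl; omega
  obtain ⟨⟨a, ha⟩, f, hf, hAf⟩ := hA
  obtain ⟨w, hwG, hwA⟩ := Set.exists_of_ssubset (hAG.ssubset_of_ne hne)
  obtain ⟨u, huG, hu⟩ := exists_notMem_vectorSpan_insert (hAG ha) hdim w
  obtain ⟨m, hm, hmu⟩ := exists_affineMap_ne_zero (Set.mem_insert_of_mem w ha) hu
  have hfw : f w ≠ 0 := fun hfw => hwA (hAf ▸ ⟨hwG, hfw⟩)
  have hmA : ∀ v ∈ A, m v = 0 := fun v hv => hm v (Set.mem_insert_of_mem w hv)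
  have not_proportional : ∀ c : ℝ, ¬ ∀ v ∈ G, m v = c * f v := by
    intro c hc
    have hcw : c * f w = 0 := (hc w hwG).symm.trans (hm w (Set.mem_insert w A))
    apply hmu
    rw [hc u huG, (mul_eq_zero_iff_right hfw).mp hcw, zero_mul]
  obtain ⟨r, hr, hF₁, hs₁⟩ := exists_tilted_face hG ⟨a, ha⟩ hf hAf hmA hne
  obtain ⟨q, hq, hF₂, hs₂⟩ := exists_tilted_face (m := -m) hG ⟨a, ha⟩ hf hAf
    (fun v hv => by simp [hmA v hv]) hne
  refine ⟨_, _, hF₁, hF₂, hs₁, hs₂,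
    Set.Subset.antisymm ?_ (Set.subset_inter hs₁.subset hs₂.subset)⟩
  rintro v ⟨⟨hv, hmr⟩, -, hmq⟩
  simp only [AffineMap.coe_neg, Pi.neg_apply] at hq hmq
  by_contra hvA
  have hfv : f v ≠ 0 := fun hfv => hvA (hAf ▸ ⟨hv, hfv⟩)
  have hrq : q = -r := mul_right_cancel₀ hfv (by linarith)
  subst hrq
  exact not_proportional r fun x hx => by linarith [hr x hx, hq x hx]

lemma IsAffineFace.mem_of_forall_facet (hV : V.Finite) (hA : IsAffineFace V A) {v : E}
    (hv : v ∈ V) (h : ∀ H ∈ facetsContaining V A, v ∈ H) : v ∈ A := by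
  induction k : affDim V - affDim A using Nat.strong_induction_on generalizing A with
  | _ k ih =>
    rcases hA.subset.eq_or_ssubset with rfl | hAV
    · exact hv
    have hlt := hA.affDim_lt hAV subset_rfl
    by_cases hfacet : affDim A + 1 = affDim V
    · exact h A ⟨⟨hA, hfacet⟩, subset_rfl⟩
    obtain ⟨G₁, G₂, hG₁, hG₂, hs₁, hs₂, hinter⟩ := hA.exists_inter_eq hV (by omega)
    have mem_of_ssubset : ∀ G, IsAffineFace V G → A ⊂ G → v ∈ G := fun G hG hAG =>
      ih _ (by have := hA.affDim_lt hAG hG.subset; omega) hG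
        (fun H hH => h H ⟨hH.1, hAG.subset.trans hH.2⟩) rfl
    exact hinter ▸ ⟨mem_of_ssubset G₁ hG₁ hs₁, mem_of_ssubset G₂ hG₂ hs₂⟩

lemma inter_sInter_facetsContaining (hV : V.Finite) (hA : IsAffineFace V A) :
    V ∩ ⋂₀ facetsContaining V A = A :=
  Set.Subset.antisymm (fun _ hv => hA.mem_of_forall_facet hV hv.1 hv.2)
    (Set.subset_inter hA.subset (Set.subset_sInter fun _ hH => hH.2))

lemma exists_proper_face_not_subset (hG : G.Finite) (hA : IsAffineFace G A)
    (hdim : affDim A + 2 ≤ affDim G) (hGV : G ⊆ V) (hH : IsAffineFace V H) (hAH : A ⊆ H)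
    (hGH : ¬ G ⊆ H) : ∃ F, IsAffineFace G F ∧ A ⊂ F ∧ F ⊂ G ∧ ¬ F ⊆ H := by
  have hface := hA
  obtain ⟨hAne, f, hf, hAf⟩ := hA
  obtain ⟨-, m, hm, rfl⟩ := hH
  obtain ⟨w, hwG, hwH⟩ := Set.not_subset.mp hGH
  have hmw : 0 < m w := (hm w (hGV hwG)).lt_of_ne' fun hmw => hwH ⟨hGV hwG, hmw⟩
  obtain ⟨r, hr, hF, hAF⟩ := exists_tilted_face (m := -m) hG hAne hf hAf
    (fun v hv => by simp [(hAH hv).2]) (by rintro rfl; omega)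
  simp only [AffineMap.coe_neg, Pi.neg_apply] at hr hF hAF
  have hr0 : r ≠ 0 := by
    rintro rfl
    linarith [hr w hwG]
  have hFH : {v ∈ G | -m v = r * f v} ∩ {v ∈ V | m v = 0} ⊆ A := by
    rintro v ⟨⟨hv, hmf⟩, -, hmv⟩
    rw [hmv, neg_zero, eq_comm, mul_eq_zero_iff_left hr0] at hmf
    exact hAf ▸ ⟨hv, hmf⟩
  rcases hF.subset.eq_or_ssubset with hFG | hFG
  · obtain ⟨G₁, G₂, hG₁, hG₂, hs₁, hs₂, hinter⟩ := hface.exists_inter_eq hG hdim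
    refine ⟨G₁, hG₁, hs₁, hG₁.subset.ssubset_of_ne ?_, fun hG₁H => ?_⟩
    · rintro rfl
      exact hs₂.not_subset fun v hv => hinter ▸ ⟨hG₂.subset hv, hv⟩
    · rw [hFG] at hFH
      exact hs₁.not_subset fun v hv => hFH ⟨hG₁.subset hv, hG₁H hv⟩
  · exact ⟨_, hF, hAF, hFG, fun hsub => hAF.not_subset fun v hv => hFH ⟨hv, hsub hv⟩⟩

lemma exists_covering_face_not_subset (hV : V.Finite) (hA : IsAffineFace V A)
    (hH : IsAffineFace V H) (hAH : A ⊆ H) (hG : IsAffineFace V G) (hAG : A ⊆ G)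
    (hGH : ¬ G ⊆ H) :
    ∃ F, IsAffineFace V F ∧ A ⊆ F ∧ F ⊆ G ∧ ¬ F ⊆ H ∧ affDim F = affDim A + 1 := by
  induction k : affDim G using Nat.strong_induction_on generalizing G with
  | _ k ih =>
    have hlt : affDim A < affDim G :=
      hA.affDim_lt (hAG.ssubset_of_ne (by rintro rfl; exact hGH hAH)) hG.subset
    by_cases hcover : affDim G = affDim A + 1
    · exact ⟨G, hG, hAG, subset_rfl, hGH, hcover⟩
    obtain ⟨K, hK, hAK, hKG, hKH⟩ := exists_proper_face_not_subset (hV.subset hG.subset)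
      (hA.restrict hAG hG.subset) (by omega) hG.subset hH hAH hGH
    obtain ⟨F, hF, hAF, hFK, hFH, hdim⟩ := ih _ (k ▸ hK.affDim_lt hKG subset_rfl)
      (hG.trans hV hK) hAK.subset hKH rfl
    exact ⟨F, hF, hAF, hFK.trans hKG.subset, hFH, hdim⟩

lemma IsAffineFace.exists_vertex (hV : V.Finite) (hA : IsAffineFace V A) :
    ∃ v ∈ A, IsAffineFace V {v} := by
  induction k : affDim A using Nat.strong_induction_on generalizing A with
  | _ k ih =>
    rcases Set.subsingleton_or_nontrivial A with hsub | hnt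
    · obtain ⟨a, ha⟩ := hA.1
      exact ⟨a, ha, hsub.eq_singleton_of_mem ha ▸ hA⟩
    obtain ⟨a, ha, b, hb, hab⟩ := hnt
    obtain ⟨m, hma, hmb⟩ := exists_affineMap_ne_zero (Set.mem_singleton a)
      (by simpa [sub_eq_zero] using hab.symm : b - a ∉ vectorSpan ℝ {a})
    obtain ⟨w, hw, hmin⟩ := Set.exists_min_image A m (hV.subset hA.subset) ⟨a, ha⟩
    have hF : IsAffineFace A {v ∈ A | m v = m w} :=
      ⟨⟨w, hw, rfl⟩, m - AffineMap.const ℝ E (m w), fun v hv => by simpa using hmin v hv,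
        by simp [sub_eq_zero]⟩
    have hFA : {v ∈ A | m v = m w} ⊂ A := by
      refine hF.subset.ssubset_of_not_subset fun hsub => hmb ?_
      rw [(hsub hb).2, ← (hsub ha).2, hma a rfl]
    obtain ⟨v, hv, hvF⟩ := ih _ (k ▸ hF.affDim_lt hFA subset_rfl) (hA.trans hV hF) rfl
    exact ⟨v, hv.1, hvF⟩

end FiniteDimensional

end PointConfigurations

section FacetGraph

open Polynomial Finset

/-- The graph on sets of points in which two distinct sets are adjacent if they meet. -/
def intersectionGraph (E : Type*) : SimpleGraph (Set E) where
  Adj A B := A ≠ B ∧ (A ∩ B).Nonempty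
  symm := ⟨fun A B h => ⟨h.1.symm, Set.inter_comm A B ▸ h.2⟩⟩
  loopless := ⟨fun _ h => h.1 rfl⟩

lemma intersectionGraph_adj {E : Type*} {A B : Set E} :
    (intersectionGraph E).Adj A B ↔ A ≠ B ∧ (A ∩ B).Nonempty :=
  Iff.rfl

variable {E : Type*} [AddCommGroup E] [Module ℝ E] {V A G H : Set E}

/-- A point configuration is flag if every collection of pairwise intersecting facets has a common
point. The empty collection is allowed, so a flag configuration is nonempty. -/
def IsFlagConfiguration (V : Set E) : Prop :=
  ∀ T : Set (Set E), (∀ H ∈ T, IsAffineFacet V H) →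
    (∀ H ∈ T, ∀ K ∈ T, (H ∩ K).Nonempty) → (V ∩ ⋂₀ T).Nonempty

lemma finite_setOf_isAffineFace (hV : V.Finite) : {A | IsAffineFace V A}.Finite :=
  hV.finite_subsets.subset fun _ hA => hA.subset

lemma finite_facetsContaining (hV : V.Finite) (A : Set E) : (facetsContaining V A).Finite :=
  (finite_setOf_isAffineFace hV).subset fun _ hH => hH.1.1

lemma facetsContaining_anti (hAG : A ⊆ G) : facetsContaining V G ⊆ facetsContaining V A :=
  fun _ hH => ⟨hH.1, hAG.trans hH.2⟩

lemma affDim_singleton (v : E) : affDim ({v} : Set E) = 0 := by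
  rw [affDim, vectorSpan_singleton, finrank_bot]

variable [FiniteDimensional ℝ E]

-- Along a chain of covering faces from `A` to `G` the dimension grows by one in each step, while at
-- least one facet is lost.
lemma ncard_facetsContaining_add_affDim_anti (hV : V.Finite) (hA : IsAffineFace V A)
    (hG : IsAffineFace V G) (hAG : A ⊆ G) :
    (facetsContaining V G).ncard + affDim G ≤ (facetsContaining V A).ncard + affDim A := by
  induction k : affDim G - affDim A generalizing A with
  | zero =>
    rcases hAG.eq_or_ssubset with rfl | hAG
    · rfl
    · have := hA.affDim_lt hAG hG.subset
      omega
  | succ k ih =>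
    have hGA : ¬ G ⊆ A := fun hGA => by
      have := affDim_mono hGA
      omega
    obtain ⟨F, hF, hAF, hFG, hFA, hdim⟩ :=
      exists_covering_face_not_subset hV hA hA subset_rfl hG hAG hGA
    have hlt : (facetsContaining V F).ncard < (facetsContaining V A).ncard := by
      refine Set.ncard_lt_ncard ⟨facetsContaining_anti hAF, fun hsub => hFA ?_⟩
        (finite_facetsContaining hV A)
      exact fun v hv => hA.mem_of_forall_facet hV (hF.subset hv) fun H hH => (hsub hH).2 hv
    have := ih hF hFG (by omega)
    omega

lemma ncard_facetsContaining_add_affDim (hV : V.Finite) (hsimple : IsSimpleConfiguration V)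
    (hA : IsAffineFace V A) : (facetsContaining V A).ncard + affDim A = affDim V := by
  obtain ⟨v, hvA, hv⟩ := hA.exists_vertex hV
  have upper := ncard_facetsContaining_add_affDim_anti hV hv hA (Set.singleton_subset_iff.mpr hvA)
  have lower := ncard_facetsContaining_add_affDim_anti hV hA
    (IsAffineFace.self (hA.1.mono hA.subset)) hA.subset
  rw [hsimple v hv, affDim_singleton] at upper
  omega

lemma exists_facetsContaining_eq_sdiff_singleton (hV : V.Finite) (hsimple : IsSimpleConfiguration V)
    (hA : IsAffineFace V A) (hH : H ∈ facetsContaining V A) :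
    ∃ F, IsAffineFace V F ∧ ¬ F ⊆ H ∧ facetsContaining V F = facetsContaining V A \ {H} := by
  have hVH : ¬ V ⊆ H := fun hVH => by
    have := affDim_mono hVH
    have := hH.1.2
    omega
  obtain ⟨F, hF, hAF, -, hFH, hdim⟩ := exists_covering_face_not_subset hV hA hH.1.1 hH.2
    (IsAffineFace.self (hA.1.mono hA.subset)) hA.subset hVH
  refine ⟨F, hF, hFH, Set.eq_of_subset_of_ncard_le ?_ ?_ (finite_facetsContaining hV A).sdiff⟩
  · rintro K hK
    exact ⟨facetsContaining_anti hAF hK, fun hKH => hFH (hKH ▸ hK.2)⟩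
  · rw [Set.ncard_sdiff_singleton_of_mem hH]
    have := ncard_facetsContaining_add_affDim hV hsimple hA
    have := ncard_facetsContaining_add_affDim hV hsimple hF
    omega

lemma facetsContaining_inter_sInter (hV : V.Finite) (hsimple : IsSimpleConfiguration V)
    {T : Set (Set E)} (hT : ∀ H ∈ T, IsAffineFacet V H) (hne : (V ∩ ⋂₀ T).Nonempty) :
    facetsContaining V (V ∩ ⋂₀ T) = T := by
  have hTsub : T ⊆ facetsContaining V (V ∩ ⋂₀ T) := fun H hH =>
    ⟨hT H hH, Set.inter_subset_right.trans (Set.sInter_subset_of_mem hH)⟩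
  have hface : IsAffineFace V (V ∩ ⋂₀ T) := isAffineFace_inter_sInter
    ((finite_facetsContaining hV _).subset hTsub) (fun H hH => (hT H hH).1) hne
  refine Set.Subset.antisymm (fun H hH => ?_) hTsub
  by_contra hHT
  obtain ⟨F, hF, hFH, hfacets⟩ := exists_facetsContaining_eq_sdiff_singleton hV hsimple hface hH
  have hTF : ∀ K ∈ T, F ⊆ K := fun K hK =>
    (hfacets ▸ ⟨hTsub hK, fun hKH => hHT (hKH ▸ hK)⟩ : K ∈ facetsContaining V F).2
  exact hFH ((Set.subset_inter hF.subset (Set.subset_sInter hTF)).trans hH.2)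

lemma bijOn_inter_sInter_cliquesIn (hV : V.Finite) (hsimple : IsSimpleConfiguration V)
    (hflag : IsFlagConfiguration V) {s : Finset (Set E)} (hs : ∀ H, H ∈ s ↔ IsAffineFacet V H) :
    Set.BijOn (fun C : Finset (Set E) => V ∩ ⋂₀ (C : Set (Set E)))
      (cliquesIn (intersectionGraph E) s) {A | IsAffineFace V A} := by
  classical
  have facetsContaining_eq : ∀ A, (({H ∈ s | A ⊆ H} : Finset (Set E)) : Set (Set E)) =
      facetsContaining V A := fun A => by
    ext H
    simp [facetsContaining, hs]
  have common_point : ∀ C ∈ cliquesIn (intersectionGraph E) s,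
      (∀ H ∈ C, IsAffineFacet V H) ∧ (V ∩ ⋂₀ (C : Set (Set E))).Nonempty := by
    intro C hC
    obtain ⟨hCs, hC⟩ := mem_cliquesIn.mp hC
    have hfacet : ∀ H ∈ C, IsAffineFacet V H := fun H hH => (hs H).mp (hCs hH)
    refine ⟨hfacet, hflag C hfacet fun H hH K hK => ?_⟩
    by_cases hHK : H = K
    · rw [← hHK, Set.inter_self]
      exact (hfacet H hH).1.1
    · exact (hC hH hK hHK).2
  refine Set.InvOn.bijOn (f' := fun A => {H ∈ s | A ⊆ H}) ⟨fun C hC => ?_, fun A hA => ?_⟩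
    (fun C hC => ?_) fun A hA => mem_coe.mpr (mem_cliquesIn.mpr ⟨filter_subset _ _, ?_⟩)
  · obtain ⟨hfacet, hne⟩ := common_point C hC
    rw [← coe_inj, facetsContaining_eq, facetsContaining_inter_sInter hV hsimple hfacet hne]
  · dsimp only
    rw [facetsContaining_eq, inter_sInter_facetsContaining hV hA]
  · obtain ⟨hfacet, hne⟩ := common_point C hC
    exact isAffineFace_inter_sInter C.finite_toSet (fun H hH => (hfacet H hH).1) hne
  · rw [facetsContaining_eq]
    exact fun H hH K hK hHK => ⟨hHK, hA.1.mono (Set.subset_inter hH.2 hK.2)⟩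

theorem ncard_affineFaces_eq_coeff_cliquePoly (hV : V.Finite) (hsimple : IsSimpleConfiguration V)
    (hflag : IsFlagConfiguration V) {s : Finset (Set E)} (hs : ∀ H, H ∈ s ↔ IsAffineFacet V H)
    {i : ℕ} (hi : i ≤ affDim V) :
    ({A | IsAffineFace V A ∧ affDim A = i}.ncard : ℤ) =
      (cliquePoly (intersectionGraph E) s).coeff (affDim V - i) := by
  have hbij := bijOn_inter_sInter_cliquesIn hV hsimple hflag hs
  have affDim_inter : ∀ C ∈ cliquesIn (intersectionGraph E) s,
      #C + affDim (V ∩ ⋂₀ (C : Set (Set E))) = affDim V := by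
    intro C hC
    have hfacet : ∀ H ∈ C, IsAffineFacet V H := fun H hH => (hs H).mp ((mem_cliquesIn.mp hC).1 hH)
    have hface := hbij.mapsTo hC
    rw [← ncard_facetsContaining_add_affDim hV hsimple hface,
      facetsContaining_inter_sInter hV hsimple hfacet hface.1, Set.ncard_coe_finset]
  have himage : {A | IsAffineFace V A ∧ affDim A = i} =
      (fun C : Finset (Set E) => V ∩ ⋂₀ (C : Set (Set E))) ''
        ({C ∈ cliquesIn (intersectionGraph E) s | #C = affDim V - i} :
          Finset (Finset (Set E))) := by
    ext A
    constructor
    · rintro ⟨hA, rfl⟩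
      obtain ⟨C, hC, rfl⟩ := hbij.surjOn hA
      have := affDim_inter C hC
      exact ⟨C, mem_coe.mpr (mem_filter.mpr ⟨hC, by dsimp only; omega⟩), rfl⟩
    · rintro ⟨C, hC, rfl⟩
      obtain ⟨hC, hcard⟩ := mem_filter.mp hC
      have := affDim_inter C hC
      exact ⟨hbij.mapsTo hC, by dsimp only; omega⟩
  rw [coeff_cliquePoly, himage,
    (hbij.injOn.mono (coe_subset.mpr (filter_subset _ _))).ncard_image, Set.ncard_coe_finset]

end FacetGraph

section ConvexHull

open Polynomial Finset

variable {E : Type*} [AddCommGroup E] [Module ℝ E] {V A B F : Set E}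

lemma nonneg_of_mem_convexHull {f : E →ᵃ[ℝ] ℝ} (hf : ∀ v ∈ V, 0 ≤ f v) {x : E}
    (hx : x ∈ convexHull ℝ V) : 0 ≤ f x :=
  convexHull_min (t := f ⁻¹' Set.Ici 0) hf ((convex_Ici 0).affine_preimage f) hx

lemma convexHull_sep_eq_zero {f : E →ᵃ[ℝ] ℝ} (hf : ∀ v ∈ V, 0 ≤ f v) :
    convexHull ℝ {v ∈ V | f v = 0} = {x ∈ convexHull ℝ V | f x = 0} := by
  set A := {v ∈ V | f v = 0}
  have hA : ∀ x ∈ convexHull ℝ A, f x = 0 := fun x hx =>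
    convexHull_min (t := f ⁻¹' {0}) (fun v hv => hv.2) ((convex_singleton 0).affine_preimage f) hx
  -- A convex combination with a point where `f` is positive is again such a point.
  have hconvex : Convex ℝ ({x | 0 < f x} ∪ convexHull ℝ A) := by
    have hnonneg : ∀ x ∈ {x | 0 < f x} ∪ convexHull ℝ A, 0 ≤ f x := by
      rintro x (hx | hx)
      exacts [le_of_lt hx, (hA x hx).ge]
    refine convex_iff_forall_pos.mpr fun x hx y hy a b ha hb hab => ?_
    have hcomb : f (a • x + b • y) = a * f x + b * f y := Convex.combo_affine_apply hab
    have hfx := mul_nonneg ha.le (hnonneg x hx)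
    have hfy := mul_nonneg hb.le (hnonneg y hy)
    rcases hx, hy with ⟨hx | hx, hy | hy⟩
    · exact .inl (by have := mul_pos ha hx; change 0 < f _; linarith)
    · exact .inl (by have := mul_pos ha hx; change 0 < f _; linarith)
    · exact .inl (by have := mul_pos hb hy; change 0 < f _; linarith)
    · exact .inr (convex_convexHull ℝ A hx hy ha.le hb.le hab)
  have hsub : convexHull ℝ V ⊆ {x | 0 < f x} ∪ convexHull ℝ A := by
    refine convexHull_min (fun v hv => ?_) hconvex
    rcases (hf v hv).eq_or_lt with hfv | hfv
    exacts [.inr (subset_convexHull ℝ A ⟨hv, hfv.symm⟩), .inl hfv]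
  refine Set.Subset.antisymm
    (fun x hx => ⟨convexHull_mono (Set.sep_subset _ _) hx, hA x hx⟩) ?_
  rintro x ⟨hx, hfx⟩
  exact (hsub hx).resolve_left hfx.not_gt

lemma affDim_convexHull (A : Set E) : affDim (convexHull ℝ A) = affDim A := by
  rw [affDim, affDim, ← direction_affineSpan, affineSpan_convexHull, direction_affineSpan]

lemma isAffineFace_convexHull (hA : IsAffineFace V A) :
    IsAffineFace (convexHull ℝ V) (convexHull ℝ A) := by
  obtain ⟨hne, f, hf, rfl⟩ := hA
  exact ⟨hne.convexHull, f, fun x => nonneg_of_mem_convexHull hf, convexHull_sep_eq_zero hf⟩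

lemma IsAffineFace.inter_convexHull (hA : IsAffineFace V A) : V ∩ convexHull ℝ A = A := by
  obtain ⟨-, f, hf, rfl⟩ := hA
  rw [convexHull_sep_eq_zero hf]
  exact Set.Subset.antisymm (fun v hv => ⟨hv.1, hv.2.2⟩)
    fun v hv => ⟨hv.1, subset_convexHull ℝ V hv.1, hv.2⟩

lemma IsAffineFace.convexHull_inter (hF : IsAffineFace (convexHull ℝ V) F) :
    convexHull ℝ (V ∩ F) = F := by
  obtain ⟨-, f, hf, rfl⟩ := hF
  have hfV : ∀ v ∈ V, 0 ≤ f v := fun v hv => hf v (subset_convexHull ℝ V hv)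
  rw [← convexHull_sep_eq_zero hfV]
  congr 1
  exact Set.Subset.antisymm (fun v hv => ⟨hv.1, (convexHull_sep_eq_zero hfV ▸ hv.2 :).2⟩)
    fun v hv => ⟨hv.1, subset_convexHull ℝ _ hv⟩

lemma IsAffineFace.nonempty_inter (hF : IsAffineFace (convexHull ℝ V) F) :
    (V ∩ F).Nonempty :=
  convexHull_nonempty_iff.mp (hF.convexHull_inter.symm ▸ hF.1)

lemma IsAffineFace.of_convexHull (hF : IsAffineFace (convexHull ℝ V) F) :
    IsAffineFace V (V ∩ F) := by
  have hne := hF.nonempty_inter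
  obtain ⟨-, f, hf, rfl⟩ := hF
  exact ⟨hne, f, fun v hv => hf v (subset_convexHull ℝ V hv),
    Set.Subset.antisymm (fun v hv => ⟨hv.1, hv.2.2⟩)
      fun v hv => ⟨hv.1, subset_convexHull ℝ V hv.1, hv.2⟩⟩

lemma bijOn_convexHull_isAffineFace (V : Set E) :
    Set.BijOn (convexHull ℝ) {A | IsAffineFace V A} {F | IsAffineFace (convexHull ℝ V) F} :=
  Set.InvOn.bijOn (f' := fun F => V ∩ F)
    ⟨fun _ hA => hA.inter_convexHull, fun _ hF => hF.convexHull_inter⟩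
    (fun _ hA => isAffineFace_convexHull hA) fun _ hF => hF.of_convexHull

lemma bijOn_convexHull_affineFaces_sep (V : Set E) (p : ℕ → Prop) :
    Set.BijOn (convexHull ℝ) {A | IsAffineFace V A ∧ p (affDim A)}
      {F | IsAffineFace (convexHull ℝ V) F ∧ p (affDim F)} :=
  (bijOn_convexHull_isAffineFace V).inter_mapsTo (s₂ := {A | p (affDim A)})
    (t₂ := {F | p (affDim F)}) (fun A hA => by rwa [Set.mem_ofPred_eq, affDim_convexHull])
    fun A hA => by simpa only [Set.mem_preimage, Set.mem_ofPred_eq, affDim_convexHull] using hA.2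

lemma bijOn_convexHull_isAffineFacet (V : Set E) :
    Set.BijOn (convexHull ℝ) {A | IsAffineFacet V A} {F | IsAffineFacet (convexHull ℝ V) F} := by
  simp only [IsAffineFacet, affDim_convexHull V]
  exact bijOn_convexHull_affineFaces_sep V fun k => k + 1 = affDim V

lemma bijOn_convexHull_facetsContaining_singleton {v : E} (hv : v ∈ V) :
    Set.BijOn (convexHull ℝ) (facetsContaining V {v}) (facetsContaining (convexHull ℝ V) {v}) := by
  refine (bijOn_convexHull_isAffineFacet V).inter_mapsTo (s₂ := {A | {v} ⊆ A})
    (t₂ := {F | {v} ⊆ F})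
    (fun A hA => Set.Subset.trans hA (subset_convexHull ℝ A)) ?_
  rintro A ⟨hA, hvA⟩
  rw [Set.mem_ofPred_eq, Set.singleton_subset_iff, ← IsAffineFace.inter_convexHull hA.1]
  exact ⟨hv, Set.singleton_subset_iff.mp hvA⟩

lemma IsSimpleConfiguration.of_convexHull (h : IsSimpleConfiguration (convexHull ℝ V)) :
    IsSimpleConfiguration V := by
  intro v hv
  have hbij := bijOn_convexHull_facetsContaining_singleton (Set.singleton_subset_iff.mp hv.subset)
  have hvP := isAffineFace_convexHull hv
  rw [convexHull_singleton] at hvP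
  rw [← hbij.injOn.ncard_image, hbij.image_eq, h v hvP, affDim_convexHull]

lemma nonempty_convexHull_inter_convexHull_iff (hA : IsAffineFace V A) (hB : IsAffineFace V B) :
    (convexHull ℝ A ∩ convexHull ℝ B).Nonempty ↔ (A ∩ B).Nonempty := by
  refine ⟨fun h => ?_, fun h => h.mono (Set.inter_subset_inter (subset_convexHull ℝ A)
    (subset_convexHull ℝ B))⟩
  have hface := (isAffineFace_convexHull hA).inter (isAffineFace_convexHull hB) h
  have hne := hface.nonempty_inter
  rwa [Set.inter_inter_distrib_left, hA.inter_convexHull, hB.inter_convexHull] at hne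

lemma IsFlagConfiguration.of_convexHull (hV : V.Finite)
    (h : IsFlagConfiguration (convexHull ℝ V)) : IsFlagConfiguration V := by
  intro T hT hpair
  have hfacet : ∀ F ∈ convexHull ℝ '' T, IsAffineFacet (convexHull ℝ V) F :=
    Set.forall_mem_image.mpr fun H hH => (bijOn_convexHull_isAffineFacet V).mapsTo (hT H hH)
  have hTfin : T.Finite := (finite_setOf_isAffineFace hV).subset fun H hH => (hT H hH).1
  have hne := h _ hfacet <| Set.forall_mem_image.mpr fun H hH => Set.forall_mem_image.mpr
    fun K hK => (nonempty_convexHull_inter_convexHull_iff (hT H hH).1 (hT K hK).1).mpr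
      (hpair H hH K hK)
  obtain ⟨v, hv, -, hvT⟩ := (isAffineFace_inter_sInter (hTfin.image _)
    (fun F hF => (hfacet F hF).1) hne).nonempty_inter
  refine ⟨v, hv, fun H hH => ?_⟩
  rw [← (hT H hH).1.inter_convexHull]
  exact ⟨hv, hvT _ (Set.mem_image_of_mem _ hH)⟩

theorem ncard_affineFaces_convexHull_eq_coeff_cliquePoly [FiniteDimensional ℝ E] (hV : V.Finite)
    (hsimple : IsSimpleConfiguration (convexHull ℝ V))
    (hflag : IsFlagConfiguration (convexHull ℝ V)) {s : Finset (Set E)}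
    (hs : ∀ F, F ∈ s ↔ IsAffineFacet (convexHull ℝ V) F) {i : ℕ}
    (hi : i ≤ affDim (convexHull ℝ V)) :
    ({F | IsAffineFace (convexHull ℝ V) F ∧ affDim F = i}.ncard : ℤ) =
      (cliquePoly (intersectionGraph E) s).coeff (affDim (convexHull ℝ V) - i) := by
  have hfin : {A | IsAffineFacet V A}.Finite :=
    (finite_setOf_isAffineFace hV).subset fun A hA => hA.1
  have hfacets : ∀ A, A ∈ hfin.toFinset ↔ IsAffineFacet V A := by simp
  have hbij := bijOn_convexHull_affineFaces_sep V (· = i)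
  have hclique : cliquePoly (intersectionGraph E) hfin.toFinset =
      cliquePoly (intersectionGraph E) s := by
    have hfacet := bijOn_convexHull_isAffineFacet V
    refine cliquePoly_congr (f := convexHull ℝ) ?_ fun A hA B hB => ?_
    · rwa [hfin.coe_toFinset, show (s : Set (Set E)) = {F | IsAffineFacet (convexHull ℝ V) F} from
        Set.ext hs]
    · rw [hfacets] at hA hB
      exact and_congr (hfacet.injOn.ne_iff hA hB).symm
        (nonempty_convexHull_inter_convexHull_iff hA.1 hB.1).symm
  rw [affDim_convexHull] at hi ⊢
  rw [← hclique, ← ncard_affineFaces_eq_coeff_cliquePoly hV hsimple.of_convexHull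
    (hflag.of_convexHull hV) hfacets hi, ← hbij.image_eq, hbij.injOn.ncard_image]

end ConvexHull

section Polytope

open Polynomial Finset

variable {d : ℕ} {P F : Set (Fin d → ℝ)}

lemma isFaceOf_iff : IsFaceOf F P ↔ IsAffineFace P F := by
  refine and_congr_right fun hne => ⟨fun h => ?_, ?_⟩
  · obtain ⟨l, rfl⟩ := h hne
    obtain ⟨x₀, hx₀, hmax⟩ := hne
    refine ⟨AffineMap.const ℝ _ (l x₀) - l.toLinearMap.toAffineMap,
      fun v hv => by simpa using hmax v hv, ?_⟩
    ext x
    suffices x ∈ P → ((∀ y ∈ P, l y ≤ l x) ↔ l x₀ = l x) by simpa [sub_eq_zero] using this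
    exact fun hx => ⟨fun hx' => (hx' x₀ hx₀).antisymm (hmax x hx), fun h => h ▸ hmax⟩
  · rintro ⟨f, hf, rfl⟩ -
    obtain ⟨x₀, hx₀, hfx₀⟩ := hne
    have hlin : ∀ x y, f.linear x ≤ f.linear y ↔ f x ≤ f y := fun x y => by
      rw [← sub_nonpos, ← map_sub, ← vsub_eq_sub, AffineMap.linearMap_vsub, vsub_eq_sub, sub_nonpos]
    refine ⟨-LinearMap.toContinuousLinearMap f.linear, ?_⟩
    ext x
    suffices x ∈ P → (f x = 0 ↔ ∀ y ∈ P, f x ≤ f y) by simpa [hlin] using this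
    exact fun hx => ⟨fun hfx y hy => hfx ▸ hf y hy,
      fun hmin => ((hmin x₀ hx₀).trans_eq hfx₀).antisymm (hf x hx)⟩

lemma polyDim_eq_affDim : polyDim P = affDim P := by
  rw [polyDim, affDim, direction_affineSpan]

lemma isFacetOf_iff : IsFacetOf F P ↔ IsAffineFacet P F := by
  rw [IsFacetOf, IsAffineFacet, isFaceOf_iff, polyDim_eq_affDim, polyDim_eq_affDim]

lemma IsSimplePolytope.isSimpleConfiguration (hP : IsSimplePolytope P) :
    IsSimpleConfiguration P := by
  intro v hv
  rw [← polyDim_eq_affDim, ← hP.2 v (isFaceOf_iff.mpr hv)]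
  simp only [facetsContaining, isFacetOf_iff, Set.singleton_subset_iff]

lemma IsFlagPolytope.isFlagConfiguration (hP : IsFlagPolytope P) (hne : P.Nonempty) :
    IsFlagConfiguration P := by
  intro T hT hpair
  have hfacet : ∀ F ∈ T, IsFacetOf F P := fun F hF => isFacetOf_iff.mpr (hT F hF)
  rcases T.eq_empty_or_nonempty with rfl | ⟨F, hF⟩
  · simpa using hne
  · obtain ⟨x, hx⟩ := hP.2 T ⟨F, hF⟩ hfacet hpair
    exact ⟨x, (hT F hF).1.subset (hx F hF), hx⟩

theorem IsFlagPolytope.ncard_faces_eq_coeff_cliquePoly (hP : IsFlagPolytope P) (hne : P.Nonempty)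
    {s : Finset (Set (Fin d → ℝ))} (hs : ∀ F, F ∈ s ↔ IsFacetOf F P) {i : ℕ} (hi : i ≤ polyDim P) :
    ({F | IsFaceOf F P ∧ polyDim F = i}.ncard : ℤ) =
      (cliquePoly (intersectionGraph (Fin d → ℝ)) s).coeff (polyDim P - i) := by
  have hsimple := hP.1.isSimpleConfiguration
  have hflag := hP.isFlagConfiguration hne
  obtain ⟨V, rfl⟩ := hP.1.1
  simp only [isFaceOf_iff, isFacetOf_iff, polyDim_eq_affDim] at hs hi ⊢
  exact ncard_affineFaces_convexHull_eq_coeff_cliquePoly V.finite_toSet hsimple hflag hs hi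

end Polytope

section PolygonModel

open Finset

variable {N n a b c d : ℕ}

lemma natCast_inj_of_lt (ha : a < N) (hb : b < N) : (a : ZMod N) = b ↔ a = b :=
  (CharP.natCast_injOn_Iio (ZMod N) N).eq_iff ha hb

lemma natCast_add_one_inj_of_lt (ha : a < N) (hb : b < N) :
    (b : ZMod N) = a + 1 ↔ b = a + 1 ∨ (b = 0 ∧ a + 1 = N) := by
  rcases (show a + 1 ≤ N from ha).eq_or_lt with h | h
  · have hzero : (a : ZMod N) + 1 = (0 : ℕ) := by rw [← Nat.cast_add_one, h]; simp
    rw [hzero, natCast_inj_of_lt hb (by omega)]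
    omega
  · rw [← Nat.cast_add_one, natCast_inj_of_lt hb h]
    omega

lemma val_natCast_sub_natCast (ha : a < N) (hc : c < N) :
    ((c : ZMod N) - (a : ZMod N)).val = if a ≤ c then c - a else c + N - a := by
  split_ifs with h
  · rw [← Nat.cast_sub h, ZMod.val_cast_of_lt (by omega)]
  · have hwrap : (c : ZMod N) - a = (c + N - a : ℕ) := by
      rw [Nat.cast_sub (by omega)]
      simp
    rw [hwrap, ZMod.val_cast_of_lt (by omega)]

lemma strictBtw_natCast_iff (ha : a < N) (hc : c < N) (hb : b < N) :
    StrictBtw N a c b ↔ (a < c ∧ c < b) ∨ (b < a ∧ (a < c ∨ c < b)) := by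
  rw [StrictBtw, val_natCast_sub_natCast ha hc, val_natCast_sub_natCast ha hb]
  split_ifs <;> omega

lemma pair_eq_pair_iff {α : Type*} [DecidableEq α] {x y z w : α} :
    ({x, y} : Finset α) = {z, w} ↔ (x = z ∧ y = w) ∨ (x = w ∧ y = z) := by
  rw [← coe_inj, coe_pair, coe_pair, Set.pair_eq_pair_iff]

lemma crosses_natCast_iff (hab : a < b) (hb : b < N) (hcd : c < d) (hd : d < N) :
    Crosses N {(a : ZMod N), (b : ZMod N)} {(c : ZMod N), (d : ZMod N)} ↔ Interlaced a b c d := by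
  constructor
  · rintro ⟨x, y, z, w, hxy, hzw, hz, hw⟩
    unfold Interlaced
    rcases pair_eq_pair_iff.mp hxy with ⟨rfl, rfl⟩ | ⟨rfl, rfl⟩ <;>
      rcases pair_eq_pair_iff.mp hzw with ⟨rfl, rfl⟩ | ⟨rfl, rfl⟩ <;>
      rw [strictBtw_natCast_iff (by omega) (by omega) (by omega)] at hz hw <;>
      omega
  · rintro (h | h)
    · refine ⟨a, b, c, d, rfl, rfl, ?_, ?_⟩ <;>
        rw [strictBtw_natCast_iff (by omega) (by omega) (by omega)] <;> omega
    · refine ⟨a, b, d, c, rfl, pair_comm _ _, ?_, ?_⟩ <;>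
        rw [strictBtw_natCast_iff (by omega) (by omega) (by omega)] <;> omega

lemma isDiag_natCast_iff (hab : a < b) (hb : b < N) :
    IsDiag N {(a : ZMod N), (b : ZMod N)} ↔ a + 2 ≤ b ∧ b + 2 ≤ a + N := by
  constructor
  · rintro ⟨x, y, hxy, -, hsucc, hpred⟩
    rw [Ne, eq_sub_iff_add_eq, eq_comm] at hpred
    rcases pair_eq_pair_iff.mp hxy with ⟨rfl, rfl⟩ | ⟨rfl, rfl⟩ <;>
      rw [Ne, natCast_add_one_inj_of_lt (by omega) (by omega)] at hsucc <;>
      rw [natCast_add_one_inj_of_lt (by omega) (by omega)] at hpred <;>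
      omega
  · intro h
    refine ⟨a, b, rfl, ?_, ?_, ?_⟩
    · rw [Ne, natCast_inj_of_lt hb (by omega)]; omega
    · rw [Ne, natCast_add_one_inj_of_lt (by omega) hb]; omega
    · rw [Ne, eq_sub_iff_add_eq, eq_comm, natCast_add_one_inj_of_lt hb (by omega)]; omega

lemma exists_natCast_pair [NeZero N] {e : Finset (ZMod N)} (he : IsDiag N e) :
    ∃ a b : ℕ, a < b ∧ b < N ∧ e = {(a : ZMod N), (b : ZMod N)} := by
  obtain ⟨x, y, rfl, hne, -⟩ := he
  rcases lt_trichotomy x.val y.val with h | h | h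
  · exact ⟨x.val, y.val, h, y.val_lt, by simp⟩
  · exact absurd (ZMod.val_injective _ h).symm hne
  · exact ⟨y.val, x.val, h, x.val_lt, by simp [pair_comm]⟩

/-- The chord of the `2n`-gon with endpoints `a` and `b`. -/
def chord (n a b : ℕ) : Finset (ZMod (2 * n)) := {(a : ZMod (2 * n)), (b : ZMod (2 * n))}

lemma chord_inj (hab : a < b) (hb : b < 2 * n) (hcd : c < d) (hd : d < 2 * n) :
    chord n a b = chord n c d ↔ a = c ∧ b = d := by
  rw [chord, chord, pair_eq_pair_iff, natCast_inj_of_lt (by omega) (by omega),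
    natCast_inj_of_lt (by omega) (by omega), natCast_inj_of_lt (by omega) (by omega),
    natCast_inj_of_lt (by omega) (by omega)]
  omega

lemma natCast_add_self_eq_zero : (n : ZMod (2 * n)) + n = 0 := by
  rw [← two_mul]
  exact_mod_cast ZMod.natCast_self (2 * n)

lemma isDiameter_chord_iff (hab : a < b) (hb : b < 2 * n) :
    IsDiameter n (chord n a b) ↔ b = a + n := by
  constructor
  · rintro ⟨x, h⟩
    have hbx : (b : ZMod (2 * n)) = a + n := by
      rcases pair_eq_pair_iff.mp h with ⟨rfl, h⟩ | ⟨h, rfl⟩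
      · exact h
      · rw [h, add_assoc, natCast_add_self_eq_zero, add_zero]
    rcases lt_or_ge a n with ha | ha
    · rwa [← Nat.cast_add, natCast_inj_of_lt hb (by omega)] at hbx
    · obtain ⟨c, rfl⟩ := Nat.exists_eq_add_of_le' ha
      rw [Nat.cast_add, add_assoc, natCast_add_self_eq_zero, add_zero,
        natCast_inj_of_lt hb (by omega)] at hbx
      omega
  · rintro rfl
    exact ⟨a, by rw [chord, Nat.cast_add]⟩

lemma centralSym_centralSym (e : Finset (ZMod (2 * n))) : centralSym n (centralSym n e) = e := by
  simp only [centralSym, image_image, Function.comp_def, add_assoc, natCast_add_self_eq_zero,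
    add_zero, image_id']

lemma centralSym_chord : centralSym n (chord n a b) = chord n (a + n) (b + n) := by
  simp only [centralSym, chord, image_insert, image_singleton, Nat.cast_add]

lemma centralSym_chord_add : centralSym n (chord n a (b + n)) = chord n b (a + n) := by
  simp only [centralSym, chord, image_insert, image_singleton, Nat.cast_add, add_assoc,
    natCast_add_self_eq_zero, add_zero, pair_comm]

lemma exists_centralSym_chord_eq (hab : a < b) (ha : a < n) (hb : b < 2 * n) :
    ∃ a' b', centralSym n (chord n a b) = chord n a' b' ∧ a' < b' ∧ b' < 2 * n ∧
      ((b < n ∧ a' = a + n ∧ b' = b + n) ∨ (n ≤ b ∧ a' + n = b ∧ b' = a + n)) := by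
  rcases lt_or_ge b n with h | h
  · exact ⟨a + n, b + n, centralSym_chord, by omega⟩
  · obtain ⟨c, rfl⟩ := Nat.exists_eq_add_of_le' h
    exact ⟨c, a + n, centralSym_chord_add, by omega⟩

/-- The orbit under the central symmetry of the chord with endpoints `a` and `b`. -/
def chordOrbit (n a b : ℕ) : Finset (Finset (ZMod (2 * n))) :=
  {chord n a b, centralSym n (chord n a b)}

lemma chordOrbit_diameter : chordOrbit n a (a + n) = {chord n a (a + n)} := by
  rw [chordOrbit, centralSym_chord_add, pair_eq_singleton]

lemma chordOrbit_inj (ha : a < n) (hab : a < b) (hb : b < a + n) (hc : c < n) (hcd : c < d)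
    (hd : d < c + n) : chordOrbit n a b = chordOrbit n c d ↔ a = c ∧ b = d := by
  refine ⟨fun h => ?_, by rintro ⟨rfl, rfl⟩; rfl⟩
  have hmem : chord n a b ∈ chordOrbit n c d := h ▸ mem_insert_self _ _
  obtain ⟨c', d', heq, hcd', hd', hor⟩ := exists_centralSym_chord_eq hcd hc (by omega)
  rw [chordOrbit, mem_insert, mem_singleton, heq, chord_inj hab (by omega) hcd (by omega),
    chord_inj hab (by omega) hcd' hd'] at hmem
  omega

lemma forall_chordOrbit_not_crosses_iff (ha : a < n) (hab : a < b) (hb : b ≤ a + n)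
    (hc : c < n) (hcd : c < d) (hd : d ≤ c + n) :
    (∀ e ∈ chordOrbit n a b, ∀ f ∈ chordOrbit n c d, ¬ Crosses (2 * n) e f) ↔
      ¬ OrbitsCross n a b c d := by
  obtain ⟨a', b', heq, hab', hb', hor⟩ := exists_centralSym_chord_eq hab ha (by omega)
  obtain ⟨c', d', heq', hcd', hd', hor'⟩ := exists_centralSym_chord_eq hcd hc (by omega)
  simp only [chordOrbit, mem_insert, mem_singleton, forall_eq_or_imp, forall_eq, heq, heq']
  unfold chord
  rw [crosses_natCast_iff hab (by omega) hcd (by omega),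
    crosses_natCast_iff hab (by omega) hcd' hd', crosses_natCast_iff hab' hb' hcd (by omega),
    crosses_natCast_iff hab' hb' hcd' hd']
  unfold OrbitsCross Interlaced
  rcases hor with ⟨-, rfl, rfl⟩ | ⟨-, rfl, rfl⟩ <;>
    rcases hor' with ⟨-, rfl, rfl⟩ | ⟨-, rfl, rfl⟩ <;> omega

lemma forall_chordOrbit_not_crosses_diameter_iff (ha : a < n) (hc : c < n) (hcd : c < d)
    (hd : d ≤ c + n) :
    (∀ f ∈ chordOrbit n c d, ¬ Crosses (2 * n) (chord n a (a + n)) f) ↔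
      ¬ OrbitsCross n a (a + n) c d := by
  rw [← forall_chordOrbit_not_crosses_iff ha (by omega) le_rfl hc hcd hd, chordOrbit_diameter]
  simp only [mem_singleton, forall_eq]

lemma exists_eq_of_mem_typeDCodes {x : ℕ × ℕ × ℕ} (hx : x ∈ typeDCodes n) :
    (∃ a b, a < n ∧ a + 2 ≤ b ∧ b < a + n ∧ x = (0, a, b)) ∨
      (∃ a < n, x = (1, a, a + n)) ∨ ∃ a < n, x = (2, a, a + n) := by
  obtain ⟨t, a, b⟩ := x
  obtain ⟨ht, ha, ⟨rfl, hab, hb⟩ | ⟨ht₀, rfl⟩⟩ := mem_typeDCodes.mp hx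
  · exact .inl ⟨a, b, ha, hab, hb, rfl⟩
  · obtain rfl | rfl : t = 1 ∨ t = 2 := by omega
    exacts [.inr (.inl ⟨a, ha, rfl⟩), .inr (.inr ⟨a, ha, rfl⟩)]

/-- The element of the type `D_n` model with a given code in `typeDCodes n`. -/
def decode (n : ℕ) : ℕ × ℕ × ℕ → DElem n
  | (0, a, b) => .pair (chordOrbit n a b)
  | (1, a, b) => .red (chord n a b)
  | (_ + 2, a, b) => .blue (chord n a b)

lemma memM_decode (hn : 2 ≤ n) {x : ℕ × ℕ × ℕ} (hx : x ∈ typeDCodes n) : memM n (decode n x) := by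
  have isDiag_chord {a b} (ha : a < n) (hab : a + 2 ≤ b) (hb : b ≤ a + n) :
      IsDiag (2 * n) (chord n a b) :=
    (isDiag_natCast_iff (by omega) (by omega)).mpr (by omega)
  rcases exists_eq_of_mem_typeDCodes hx with
    ⟨a, b, ha, hab, hb, rfl⟩ | ⟨a, ha, rfl⟩ | ⟨a, ha, rfl⟩
  · refine ⟨_, isDiag_chord ha hab hb.le, ?_, rfl⟩
    rw [isDiameter_chord_iff (by omega) (by omega)]
    omega
  all_goals
    exact ⟨isDiag_chord ha (Nat.add_le_add_left hn a) le_rfl,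
      (isDiameter_chord_iff (by omega) (by omega)).mpr rfl⟩

lemma injOn_decode : Set.InjOn (decode n) (typeDCodes n) := by
  intro x hx y hy h
  rcases exists_eq_of_mem_typeDCodes hx with
    ⟨a, b, ha, hab, hb, rfl⟩ | ⟨a, ha, rfl⟩ | ⟨a, ha, rfl⟩ <;>
  rcases exists_eq_of_mem_typeDCodes hy with
    ⟨c, d, hc, hcd, hd, rfl⟩ | ⟨c, hc, rfl⟩ | ⟨c, hc, rfl⟩ <;>
  simp only [decode, reduceCtorEq, DElem.pair.injEq, DElem.red.injEq, DElem.blue.injEq] at h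
  · obtain ⟨rfl, rfl⟩ := (chordOrbit_inj ha (by omega) hb hc (by omega) hd).mp h
    rfl
  all_goals
    obtain ⟨rfl, -⟩ := (chord_inj (by omega) (by omega) (by omega) (by omega)).mp h
    rfl

lemma exists_code_chordOrbit {e : Finset (ZMod (2 * n))} (hn : 2 ≤ n) (he : IsDiag (2 * n) e)
    (hdiam : ¬ IsDiameter n e) :
    ∃ a b, (0, a, b) ∈ typeDCodes n ∧ chordOrbit n a b = {e, centralSym n e} := by
  have : NeZero (2 * n) := ⟨by omega⟩
  obtain ⟨a, b, hab, hb, rfl⟩ := exists_natCast_pair he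
  change ¬ IsDiameter n (chord n a b) at hdiam
  rw [isDiag_natCast_iff hab hb] at he
  rw [isDiameter_chord_iff hab hb] at hdiam
  change ∃ c d, _ ∧ chordOrbit n c d = chordOrbit n a b
  have chordOrbit_eq {c d} (h : centralSym n (chord n c d) = chord n a b) :
      chordOrbit n c d = chordOrbit n a b := by
    rw [chordOrbit, chordOrbit, ← h, centralSym_centralSym, pair_comm]
  by_cases hlt : a < n ∧ b < a + n
  · exact ⟨a, b, mem_typeDCodes.mpr (by omega), rfl⟩
  obtain ⟨d, rfl⟩ : ∃ d, b = d + n := ⟨b - n, by omega⟩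
  rcases lt_or_ge a n with ha | ha
  · exact ⟨d, a + n, mem_typeDCodes.mpr (by omega), chordOrbit_eq centralSym_chord_add⟩
  · obtain ⟨c, rfl⟩ := Nat.exists_eq_add_of_le' ha
    exact ⟨c, d, mem_typeDCodes.mpr (by omega), chordOrbit_eq centralSym_chord⟩

lemma exists_chord_of_isDiameter {e : Finset (ZMod (2 * n))} (hn : 2 ≤ n) (he : IsDiag (2 * n) e)
    (hdiam : IsDiameter n e) : ∃ a < n, chord n a (a + n) = e := by
  have : NeZero (2 * n) := ⟨by omega⟩
  obtain ⟨a, b, hab, hb, rfl⟩ := exists_natCast_pair he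
  obtain rfl := (isDiameter_chord_iff hab hb).mp hdiam
  exact ⟨a, by omega, rfl⟩

lemma exists_decode_eq (hn : 2 ≤ n) {z : DElem n} (hz : memM n z) :
    ∃ x ∈ typeDCodes n, decode n x = z := by
  match z, hz with
  | .pair _, ⟨e, he, hdiam, rfl⟩ =>
    obtain ⟨a, b, hmem, horbit⟩ := exists_code_chordOrbit hn he hdiam
    exact ⟨(0, a, b), hmem, congrArg _ horbit⟩
  | .red _, ⟨he, hdiam⟩ =>
    obtain ⟨a, ha, rfl⟩ := exists_chord_of_isDiameter hn he hdiam
    exact ⟨(1, a, a + n), mem_typeDCodes.mpr (by omega), rfl⟩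
  | .blue _, ⟨he, hdiam⟩ =>
    obtain ⟨a, ha, rfl⟩ := exists_chord_of_isDiameter hn he hdiam
    exact ⟨(2, a, a + n), mem_typeDCodes.mpr (by omega), rfl⟩

lemma dCompat_decode_iff {x y : ℕ × ℕ × ℕ} (hx : x ∈ typeDCodes n) (hy : y ∈ typeDCodes n)
    (hxy : x ≠ y) : DCompat n (decode n x) (decode n y) ↔ (typeDGraph n).Adj x y := by
  have diameter_inj {a c} (ha : a < n) (hc : c < n) :
      chord n a (a + n) = chord n c (c + n) ↔ a = c := by
    rw [chord_inj (by omega) (by omega) (by omega) (by omega)]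
    omega
  rcases exists_eq_of_mem_typeDCodes hx with
    ⟨a, b, ha, hab, hb, rfl⟩ | ⟨a, ha, rfl⟩ | ⟨a, ha, rfl⟩ <;>
  rcases exists_eq_of_mem_typeDCodes hy with
    ⟨c, d, hc, hcd, hd, rfl⟩ | ⟨c, hc, rfl⟩ | ⟨c, hc, rfl⟩ <;>
  simp only [decode, DCompat]
  · rw [forall_chordOrbit_not_crosses_iff ha (by omega) hb.le hc (by omega) hd.le]
    simp [typeDGraph, hxy]
  · rw [(typeDGraph n).adj_comm, forall_chordOrbit_not_crosses_diameter_iff hc ha (by omega) hb.le]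
    simp [typeDGraph]
  · rw [(typeDGraph n).adj_comm, forall_chordOrbit_not_crosses_diameter_iff hc ha (by omega) hb.le]
    simp [typeDGraph]
  · rw [forall_chordOrbit_not_crosses_diameter_iff ha hc (by omega) hd.le]
    simp [typeDGraph]
  · simpa [typeDGraph] using hxy
  · simp [typeDGraph, diameter_inj ha hc]
  · rw [forall_chordOrbit_not_crosses_diameter_iff ha hc (by omega) hd.le]
    simp [typeDGraph]
  · simp [typeDGraph, diameter_inj ha hc]
  · simpa [typeDGraph] using hxy

end PolygonModel

section Realization

open Polynomial

variable {n d : ℕ} {P : Set (Fin d → ℝ)}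

lemma RealizesD.exists_bijOn_facets (hP : RealizesD n P) (hn : 2 ≤ n) :
    ∃ f : ℕ × ℕ × ℕ → Set (Fin d → ℝ), Set.BijOn f (typeDCodes n) {F | IsFacetOf F P} ∧
      ∀ x ∈ typeDCodes n, ∀ y ∈ typeDCodes n,
        ((typeDGraph n).Adj x y ↔ (intersectionGraph (Fin d → ℝ)).Adj (f x) (f y)) := by
  classical
  obtain ⟨φ, -, -, -, hfacet, hinj, hsurj, hcompat⟩ := hP
  obtain ⟨f, hf⟩ : ∃ f : ℕ × ℕ × ℕ → Set (Fin d → ℝ),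
      ∀ x (hx : x ∈ typeDCodes n), f x = φ ⟨decode n x, memM_decode hn hx⟩ :=
    ⟨fun x => if hx : x ∈ typeDCodes n then φ ⟨decode n x, memM_decode hn hx⟩ else ∅,
      fun x hx => dif_pos hx⟩
  have injOn_f : Set.InjOn f (typeDCodes n) := by
    intro x hx y hy h
    rw [hf x hx, hf y hy] at h
    exact injOn_decode hx hy (congrArg Subtype.val (hinj h))
  refine ⟨f, ⟨fun x hx => hf x hx ▸ hfacet _, injOn_f, fun F hF => ?_⟩, fun x hx y hy => ?_⟩
  · obtain ⟨z, rfl⟩ := hsurj F hF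
    obtain ⟨x, hx, hxz⟩ := exists_decode_eq hn z.2
    exact ⟨x, hx, (hf x hx).trans (congrArg φ (Subtype.ext hxz))⟩
  · rcases eq_or_ne x y with rfl | hxy
    · simp only [SimpleGraph.irrefl]
    · have ne_decode :
          (⟨decode n x, memM_decode hn hx⟩ : MSet n) ≠ ⟨decode n y, memM_decode hn hy⟩ :=
        fun h => hxy (injOn_decode hx hy (congrArg Subtype.val h))
      have hinter : (f x ∩ f y).Nonempty ↔ (typeDGraph n).Adj x y := by
        rw [hf x hx, hf y hy]
        exact (hcompat _ _ ne_decode).trans (dCompat_decode_iff hx hy hxy)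
      rw [intersectionGraph_adj, hinter, and_iff_right (injOn_f.ne hx hy hxy)]

theorem RealizesD.ncard_faces_eq_coeff_typeDPoly (hP : RealizesD n P) (hn : 2 ≤ n) {i : ℕ}
    (hi : i ≤ n) :
    ({F | IsFaceOf F P ∧ polyDim F = i}.ncard : ℤ) = (typeDPoly n).coeff (n - i) := by
  classical
  obtain ⟨f, hbij, hadj⟩ := hP.exists_bijOn_facets hn
  obtain ⟨-, -, hflag, hdim, -⟩ := hP
  have hne : P.Nonempty := by
    rw [Set.nonempty_iff_ne_empty]
    rintro rfl
    rw [polyDim, AffineSubspace.span_empty, AffineSubspace.direction_bot, finrank_bot] at hdim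
    omega
  have hs : ∀ F, F ∈ (typeDCodes n).image f ↔ IsFacetOf F P := fun F => by
    rw [← Finset.mem_coe, Finset.coe_image, hbij.image_eq, Set.mem_ofPred_eq]
  have himage : Set.BijOn f (typeDCodes n) ((typeDCodes n).image f : Finset _) := by
    rw [Finset.coe_image]
    exact hbij.injOn.bijOn_image
  rw [hflag.ncard_faces_eq_coeff_cliquePoly hne hs (hdim ▸ hi), hdim, typeDPoly,
    cliquePoly_congr himage hadj]

end Realization

/-- Gal's conjecture holds for generalized associahedra of type `D_n`. -/
theorem gal_conjecture_typeD (n d : ℕ) (hn : 2 ≤ n) (P : Set (Fin d → ℝ))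
    (hP : RealizesD n P) :
    ∃ γ : ℕ → ℕ,
      ∑ i ∈ Finset.range (n + 1),
          (({F : Set (Fin d → ℝ) | IsFaceOf F P ∧ polyDim F = i}.ncard : Polynomial ℤ)
            * (Polynomial.X - 1) ^ i)
        = ∑ j ∈ Finset.range (n / 2 + 1),
            (γ j : Polynomial ℤ) * Polynomial.X ^ j
              * (1 + Polynomial.X) ^ (n - 2 * j) := by
  obtain ⟨k, rfl⟩ := Nat.exists_eq_add_of_le' hn
  have toNat_gammaD (j : ℕ) : (((gammaD k j).toNat : ℤ) : Polynomial ℤ) = gammaD k j := by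
    rw [Int.toNat_of_nonneg (gammaD_nonneg k j)]
  have card_faces {i : ℕ} (hi : i ∈ Finset.range (k + 2 + 1)) :
      (({F : Set (Fin d → ℝ) | IsFaceOf F P ∧ polyDim F = i}.ncard : ℤ) : Polynomial ℤ) =
        (ofGamma (k + 2) (gammaD k)).coeff (k + 2 - i) := by
    rw [hP.ncard_faces_eq_coeff_typeDPoly hn (Finset.mem_range_succ_iff.mp hi),
      typeDPoly_eq_ofGamma]
  refine ⟨fun j => (gammaD k j).toNat, ?_⟩
  simp only [← Int.cast_natCast (R := Polynomial ℤ), toNat_gammaD]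
  rw [← sum_coeff_ofGamma_mul_X_sub_one_pow]
  exact Finset.sum_congr rfl fun i hi => by rw [card_faces hi]

end GalD
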